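/- Let $\nu, s, w \in \mathbb{C}$ with $0 < \mathrm{Re}\,\nu < 1/2$ and $\mathrm{Re}\,\nu < \mathrm{Re}\big(\frac{w - s}{2}\big) < \frac{1}{2}$, where additionally $-1/2 > \mathrm{Re}\,w > \max(2\,\mathrm{Re}\,\nu + \mathrm{Re}\,s, -1)$. Then $\int_1^\infty (t - 1)^{(w - s)/2 - 1}\, Q^{-\nu}_{-(w+1)/2}(t)\, Q^{-\nu}_{(s-1)/2}(t)\, dt = 2^{(s - w)/2 - 1}\, e^{-2i\nu\pi}\, \dfrac{\cos(\pi\nu)}{\sqrt{\pi}}\, \dfrac{\Gamma(\frac{1 + s - w}{2})\, \Gamma(\frac{w - s}{2})\, \Gamma(\frac{w - s}{2} - \nu)\, \Gamma(\frac{w - s}{2} + \nu)}{\Gamma(\frac{1 - s}{2})\, \Gamma(\frac{1 + w}{2})}\, \Gamma\big(\tfrac{1 + s}{2} - \nu\big)\, \Gamma\big(\tfrac{1 - w}{2} - \nu\big)$. -/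

import Mathlib

/-!
The proof starts from a Mehler-type integral (`mehler_integral`): with `r = t - √(t² - 1)`, the
integral of `x ^ (A - 1) (1 - 2tx + x²) ^ (ν - 1/2)` over `(0, r)` is a multiple of the quadratic
hypergeometric function that defines `Q`. It follows from the substitution `v = 2tx / (1 + x²)`, the
generating function of the generalised Catalan coefficients (`hasSum_catalanCoeff`) and termwise
beta integrals.

Write `normQ ν μ` for `Q_μ^{-ν}` without its factors independent of `t`, and `λ = (w - s) / 2`, so
that the two degrees are `ρ = -(w + 1) / 2` and `-1 - λ - ρ`. Mehler's integral applies to the first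
factor with parameter `ν`, and to the second one, after Euler's transformation of `₂F₁`, with
parameter `-ν`. The factors `(t² - 1) ^ (∓ν/2)` then cancel, and the integral of the product becomes
a triple integral over `(t, x, y)`. The change of variables `rectMap`, given by `x = gX`, `y = gY`
and `1 - 2tx + x² = (1 - X)(1 - XYg²)`, `1 - 2ty + y² = (1 - Y)(1 - XYg²)`, is a bijection from an
explicit region. Because the exponents `ν - 1/2` and `-ν - 1/2` add up to `-1`, the powers of
`1 - XYg²` cancel against the Jacobian; because the exponents of `x` and `y` are matched to that of
`t - 1` by the relation between the degrees, the `g`-integral is a beta integral times a power of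
`(1 - X)(1 - Y)`, and the rest is a product of two beta integrals (`integral_mehler_product`).

Both Mehler integrals converge only for `Re ν - 1 < Re ρ < Re ν - Re λ`, which does not cover the
range of the theorem. Both sides are holomorphic in `ρ` on the larger strip
`-3/2 < Re ρ < 1/2 - Re λ`: a contiguous relation brings `₂F₁` into the range of Euler's integral,
which gives holomorphy and, locally uniformly in `ρ`, the integrable majorant
`(t - 1) ^ (Re λ - Re ν - 1) * t ^ (Re λ + Re ν - 1)`. The identity theorem extends the formula
(`normQ_product_integral`), and the constants simplify by `Γ(1/2 + ν) Γ(1/2 - ν) cos πν = π`.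
-/

open MeasureTheory Filter Set Topology Complex intervalIntegral

/-- Bessel function of the first kind of complex order `ν`. -/
noncomputable def besselJ (ν z : ℂ) : ℂ :=
  ∑' n : ℕ, ((-1 : ℂ) ^ n / (Complex.Gamma (n + 1) * Complex.Gamma (n + ν + 1))) *
    (z / 2) ^ (2 * (n : ℂ) + ν)

/-- Bessel function of the second kind of complex order `ν`, defined by the usual
limit formula (which for non-integer order reduces to
`(J ν z * cos (π ν) - J (-ν) z) / sin (π ν)`). -/
noncomputable def besselY (ν z : ℂ) : ℂ :=
  limUnder (𝓝[≠] ν) fun μ =>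
    (besselJ μ z * Complex.cos (Real.pi * μ) - besselJ (-μ) z) / Complex.sin (Real.pi * μ)

/-- The Weber kernel `C_ν(α, β) = J_ν(α) Y_ν(β) - Y_ν(α) J_ν(β)`. -/
noncomputable def weberC (ν α β : ℂ) : ℂ :=
  besselJ ν α * besselY ν β - besselY ν α * besselJ ν β

/-- Gauss hypergeometric series `₂F₁(a, b; c; z)`. -/
noncomputable def hyp2F1 (a b c z : ℂ) : ℂ :=
  ∑' n : ℕ, ((ascPochhammer ℂ n).eval a * (ascPochhammer ℂ n).eval b /
    ((ascPochhammer ℂ n).eval c * (n.factorial : ℂ))) * z ^ n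

/-- The associated Legendre function of the second kind `Q_μ^ν(z)` (order `ν`, degree `μ`),
for `z` off the cut `(-∞, 1]`. -/
noncomputable def legendreQ (ν μ z : ℂ) : ℂ :=
  Complex.exp (ν * Real.pi * Complex.I) * (Real.sqrt Real.pi : ℂ) * 2 ^ (-μ - 1) *
    (Complex.Gamma (μ + ν + 1) / Complex.Gamma (μ + 3 / 2)) *
    z ^ (-μ - ν - 1) * (z ^ 2 - 1) ^ (ν / 2) *
    hyp2F1 ((μ + ν + 2) / 2) ((μ + ν + 1) / 2) (μ + 3 / 2) (1 / z ^ 2)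

/-- `g` belongs to the class `𝓜₀,₁⁻¹(L_c)` on the vertical line `Re s = μ`, with Mellin
transform `gs`:  `s ↦ s * gs s` is integrable on the line, and `g` is recovered from `gs`
by the inverse Mellin transform. -/
def MellinClass01 (μ : ℝ) (g : ℝ → ℂ) (gs : ℂ → ℂ) : Prop :=
  (Integrable fun τ : ℝ => ((μ : ℂ) + τ * Complex.I) * gs ((μ : ℂ) + τ * Complex.I)) ∧
  ∀ x : ℝ, 0 < x →
    g x = (2 * Real.pi * Complex.I)⁻¹ *
      (Complex.I * ∫ τ : ℝ, gs ((μ : ℂ) + τ * Complex.I) * (x : ℂ) ^ (-((μ : ℂ) + τ * Complex.I)))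

/-! ### Beta integrals and Euler's integral for `₂F₁` -/

theorem choose_eq_pochhammer (a : ℂ) (n : ℕ) :
    Ring.choose (a + n - 1) n = (ascPochhammer ℂ n).eval a / (n.factorial : ℂ) := by
  rw [← Ring.multichoose_eq, eq_div_iff (by exact_mod_cast n.factorial_ne_zero), mul_comm,
    ← nsmul_eq_mul, Ring.factorial_nsmul_multichoose_eq_ascPochhammer,
    Polynomial.ascPochhammer_smeval_eq_eval]

theorem hasSum_pochhammer (a : ℂ) {x : ℂ} (hx : ‖x‖ < 1) :
    HasSum (fun n : ℕ => (ascPochhammer ℂ n).eval a / (n.factorial : ℂ) * x ^ n)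
      ((1 - x) ^ (-a)) := by
  have h := (one_div_one_sub_cpow_hasFPowerSeriesOnBall_zero a).hasSum (y := x)
    (by simpa [enorm_eq_nnnorm, ← NNReal.coe_lt_one] using hx)
  simp only [FormalMultilinearSeries.ofScalars_apply_eq, choose_eq_pochhammer, zero_add,
    smul_eq_mul] at h
  rwa [one_div, ← cpow_neg] at h

theorem summable_norm_pochhammer (a : ℂ) {r : ℝ} (h0 : 0 ≤ r) (hr : r < 1) :
    Summable fun n : ℕ => ‖(ascPochhammer ℂ n).eval a / (n.factorial : ℂ)‖ * r ^ n := by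
  have h := (hasSum_pochhammer a (x := (r : ℂ)) (by simpa [abs_of_nonneg h0] using hr)).summable.norm
  simpa [abs_of_nonneg h0] using h

theorem beta_integrable {u v : ℂ} (hu : 0 < u.re) (hv : 0 < v.re) :
    IntegrableOn (fun x : ℝ => (x : ℂ) ^ (u - 1) * (1 - (x : ℂ)) ^ (v - 1)) (Ioo 0 1) := by
  have := betaIntegral_convergent hu hv
  rw [intervalIntegrable_iff_integrableOn_Ioo_of_le zero_le_one] at this
  exact this

theorem beta_integral {u v : ℂ} (hu : 0 < u.re) (hv : 0 < v.re) :
    ∫ x : ℝ in Ioo 0 1, (x : ℂ) ^ (u - 1) * (1 - (x : ℂ)) ^ (v - 1) =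
      Gamma u * Gamma v / Gamma (u + v) := by
  rw [← betaIntegral_eq_Gamma_mul_div u v hu hv, betaIntegral,
    intervalIntegral.integral_of_le zero_le_one, integral_Ioc_eq_integral_Ioo]

theorem norm_beta_integrand {u v : ℂ} {x : ℝ} (hx : x ∈ Ioo (0:ℝ) 1) :
    ‖(x : ℂ) ^ (u - 1) * (1 - (x : ℂ)) ^ (v - 1)‖ = x ^ (u.re - 1) * (1 - x) ^ (v.re - 1) := by
  have h1 : (1 - (x : ℂ)) = ((1 - x : ℝ) : ℂ) := by push_cast; rfl
  rw [norm_mul, h1, norm_cpow_eq_rpow_re_of_pos hx.1, norm_cpow_eq_rpow_re_of_pos (by linarith [hx.2])]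
  simp

theorem beta_integrable_real {u v : ℝ} (hu : 0 < u) (hv : 0 < v) :
    IntegrableOn (fun x : ℝ => x ^ (u - 1) * (1 - x) ^ (v - 1)) (Ioo 0 1) := by
  have h : IntegrableOn (fun x : ℝ => ‖(x : ℂ) ^ ((u : ℂ) - 1) * (1 - (x : ℂ)) ^ ((v : ℂ) - 1)‖)
    (Ioo 0 1) := (beta_integrable (u := u) (v := v) (by simpa) (by simpa)).norm
  refine h.congr_fun (fun x hx => ?_) measurableSet_Ioo
  simpa using norm_beta_integrand (u := u) (v := v) hx

theorem ne_neg_nat_of_re_pos {a : ℂ} (ha : 0 < a.re) (k : ℕ) : a ≠ -k := by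
  rintro rfl
  simp only [neg_re, natCast_re] at ha
  linarith [k.cast_nonneg (α := ℝ)]

/-- Euler's integral for `₂F₁`, by termwise integration of the binomial series. The `HasSum` form
also provides the convergence of the hypergeometric series. -/
theorem euler_hasSum {a b c : ℂ} (hb : 0 < b.re) (hc : 0 < (c - b).re) {z : ℝ}
    (hz : 0 ≤ z) (hz1 : z < 1) :
    HasSum (fun n : ℕ => (ascPochhammer ℂ n).eval a * (ascPochhammer ℂ n).eval b /
        ((ascPochhammer ℂ n).eval c * (n.factorial : ℂ)) * (z : ℂ) ^ n *
        (Gamma b * Gamma (c - b) / Gamma c))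
      (∫ u : ℝ in Ioo 0 1, (u : ℂ) ^ (b - 1) * (1 - (u : ℂ)) ^ (c - b - 1) *
        (1 - (u : ℂ) * z) ^ (-a)) := by
  set k : ℝ → ℂ := fun u => (u : ℂ) ^ (b - 1) * (1 - (u : ℂ)) ^ (c - b - 1) with hk
  have hcre : 0 < c.re := by simp at hc; linarith
  have hcn := ne_neg_nat_of_re_pos hcre
  have hbn := ne_neg_nat_of_re_pos hb
  have hkint : IntegrableOn k (Ioo 0 1) := beta_integrable hb hc
  set F : ℕ → ℝ → ℂ := fun n u => (ascPochhammer ℂ n).eval a / (n.factorial : ℂ) * (z : ℂ) ^ n *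
    ((u : ℂ) ^ (b + n - 1) * (1 - (u : ℂ)) ^ (c - b - 1)) with hF
  have hbn_re (n : ℕ) : 0 < (b + n).re := by simp; positivity
  have hFi (n : ℕ) : IntegrableOn (F n) (Ioo 0 1) := (beta_integrable (hbn_re n) hc).const_mul _
  have hpow (n : ℕ) {u : ℝ} (hu : u ∈ Ioo (0:ℝ) 1) :
      (u : ℂ) ^ (b + n - 1) = (u : ℂ) ^ (b - 1) * (u : ℂ) ^ n := by
    rw [show b + n - 1 = (b - 1) + n by ring, cpow_add _ _ (by exact_mod_cast hu.1.ne'), cpow_natCast]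
  have hFn (n : ℕ) : ∫ u in Ioo (0:ℝ) 1, ‖F n u‖ ≤
      (‖(ascPochhammer ℂ n).eval a / (n.factorial : ℂ)‖ * z ^ n) * ∫ u in Ioo (0:ℝ) 1, ‖k u‖ := by
    rw [← MeasureTheory.integral_const_mul]
    refine setIntegral_mono_on (hFi n).norm (hkint.norm.const_mul _) measurableSet_Ioo fun u hu => ?_
    have h1 : ‖(u : ℂ) ^ n‖ ≤ 1 := by
      rw [norm_pow, norm_real, Real.norm_of_nonneg hu.1.le]
      exact pow_le_one₀ hu.1.le hu.2.le
    simp only [hF, hk, hpow n hu, norm_mul, norm_pow, norm_real, Real.norm_of_nonneg hz]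
    simp only [norm_pow, norm_real] at h1
    refine mul_le_mul_of_nonneg_left ?_ (by positivity)
    exact mul_le_mul_of_nonneg_right (mul_le_of_le_one_right (norm_nonneg _) h1) (norm_nonneg _)
  have hs : Summable fun n => ∫ u in Ioo (0:ℝ) 1, ‖F n u‖ :=
    Summable.of_nonneg_of_le (fun n => integral_nonneg fun u => norm_nonneg _) hFn
      ((summable_norm_pochhammer a hz hz1).mul_right _)
  have key := hasSum_integral_of_summable_integral_norm hFi hs
  have e1 : ∫ u in Ioo (0:ℝ) 1, (∑' n, F n u) = ∫ u : ℝ in Ioo 0 1, (u : ℂ) ^ (b - 1) *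
      (1 - (u : ℂ)) ^ (c - b - 1) * (1 - (u : ℂ) * z) ^ (-a) := by
    refine setIntegral_congr_fun measurableSet_Ioo fun u hu => ?_
    have hn : ‖(u : ℂ) * z‖ < 1 := by
      rw [norm_mul, norm_real, norm_real, Real.norm_of_nonneg hu.1.le, Real.norm_of_nonneg hz]
      nlinarith [hu.1, hu.2]
    have := ((hasSum_pochhammer a hn).mul_left (k u)).tsum_eq
    simp only [hk] at this
    rw [← this]
    refine tsum_congr fun n => ?_
    simp only [hF, hpow n hu, mul_pow]
    ring
  rw [e1] at key
  refine (congrArg (fun f : ℕ → ℂ => HasSum f _) (funext fun n => ?_)).mp key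
  simp only [hF]
  rw [MeasureTheory.integral_const_mul, beta_integral (hbn_re n) hc, ← Gamma_add_nat_div_Gamma_eq c hcn, ← Gamma_add_nat_div_Gamma_eq b hbn,
    show b + n + (c - b) = c + n by ring]
  have hG1 : Gamma c ≠ 0 := Gamma_ne_zero hcn
  have hG2 : Gamma b ≠ 0 := Gamma_ne_zero hbn
  have hG3 : Gamma (c + n) ≠ 0 := Gamma_ne_zero_of_re_pos (by simp; positivity)
  field_simp

theorem euler_integral {a b c : ℂ} (hb : 0 < b.re) (hc : 0 < (c - b).re) {z : ℝ}
    (hz : 0 ≤ z) (hz1 : z < 1) :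
    ∫ u : ℝ in Ioo 0 1, (u : ℂ) ^ (b - 1) * (1 - (u : ℂ)) ^ (c - b - 1) *
        (1 - (u : ℂ) * z) ^ (-a) =
      hyp2F1 a b c z * (Gamma b * Gamma (c - b) / Gamma c) := by
  rw [← (euler_hasSum hb hc hz hz1).tsum_eq, hyp2F1, ← tsum_mul_right]

/-! ### Euler's transformation -/

/-- Euler's transformation, obtained from the substitution `u = (1 - v) / (1 - v z)` in Euler's
integral. -/
theorem euler_transformation {a b c : ℂ} (ha : 0 < a.re) (hc : 0 < (c - a).re) {z : ℝ}
    (hz : 0 ≤ z) (hz1 : z < 1) :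
    hyp2F1 b a c z = (1 - (z : ℂ)) ^ (c - a - b) * hyp2F1 (c - b) (c - a) c z := by
  have hcre : 0 < c.re := by simp at hc; linarith
  have hB : Gamma a * Gamma (c - a) / Gamma c ≠ 0 :=
    div_ne_zero (mul_ne_zero (Gamma_ne_zero_of_re_pos ha) (Gamma_ne_zero_of_re_pos hc))
      (Gamma_ne_zero_of_re_pos hcre)
  refine mul_right_cancel₀ hB ?_
  have e1 := euler_integral (a := b) ha hc hz hz1
  have e2 := euler_integral (a := c - b) (b := c - a) (c := c) hc (by simpa using ha) hz hz1
  rw [show c - (c - a) = a by ring, mul_comm (Gamma (c - a))] at e2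
  rw [mul_assoc, ← e1, ← e2]
  have hd {v : ℝ} (hv : v ∈ Ioo (0:ℝ) 1) : 0 < 1 - v * z := by nlinarith [hv.1, hv.2]
  set φ : ℝ → ℝ := fun v => (1 - v) / (1 - v * z) with hφ
  have hder : ∀ v ∈ Ioo (0:ℝ) 1, HasDerivWithinAt φ (-(1 - z) / (1 - v * z) ^ 2) (Ioo 0 1) v := by
    intro v hv
    have h1 : HasDerivAt (fun v : ℝ => 1 - v) (-1) v := by
      simpa using (hasDerivAt_id v).const_sub 1
    have h2 : HasDerivAt (fun v : ℝ => 1 - v * z) (-z) v := by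
      simpa using ((hasDerivAt_id v).mul_const z).const_sub 1
    exact ((h1.div h2 (hd hv).ne').congr_deriv (by ring)).hasDerivWithinAt
  have hinj : InjOn φ (Ioo 0 1) := by
    intro v hv v' hv' h
    simp only [hφ] at h
    rw [div_eq_div_iff (hd hv).ne' (hd hv').ne'] at h
    have : (v - v') * (1 - z) = 0 := by linear_combination -h
    rcases mul_eq_zero.1 this with h | h <;> linarith
  have him : φ '' Ioo 0 1 = Ioo 0 1 := by
    ext u
    constructor
    · rintro ⟨v, hv, rfl⟩
      refine ⟨div_pos (by linarith [hv.2]) (hd hv), ?_⟩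
      rw [div_lt_one (hd hv)]
      nlinarith [hv.1]
    · intro hu
      refine ⟨φ u, ⟨div_pos (by linarith [hu.2]) (hd hu), ?_⟩, ?_⟩
      · rw [div_lt_one (hd hu)]
        nlinarith [hu.1]
      · simp only [hφ]
        have h1 := (hd hu).ne'
        have h2 : (1 - u * z) - (1 - u) * z ≠ 0 := by
          have : (1 - u * z) - (1 - u) * z = 1 - z := by ring
          rw [this]; linarith
        have h3 : 1 - (1 - u) / (1 - u * z) * z ≠ 0 := by
          rw [show 1 - (1 - u) / (1 - u * z) * z = ((1 - u * z) - (1 - u) * z) / (1 - u * z) by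
            field_simp]
          exact div_ne_zero h2 h1
        rw [div_eq_iff h3]
        field_simp
        ring
  have hcv := integral_image_eq_integral_abs_deriv_smul measurableSet_Ioo hder hinj
    (fun u : ℝ => (u : ℂ) ^ (a - 1) * (1 - (u : ℂ)) ^ (c - a - 1) * (1 - (u : ℂ) * z) ^ (-b))
  rw [him] at hcv
  rw [hcv, ← MeasureTheory.integral_const_mul]
  refine setIntegral_congr_fun measurableSet_Ioo fun v hv => ?_
  have hz1' : 0 < 1 - z := by linarith
  have hv1 : 0 < 1 - v := by linarith [hv.2]
  have hdv := hd hv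
  have c1 : (φ v : ℂ) = (((1 - v : ℝ) : ℂ)) / ((1 - v * z : ℝ) : ℂ) := by simp [hφ]
  have c2 : 1 - (φ v : ℂ) = ((v * (1 - z) : ℝ) : ℂ) / ((1 - v * z : ℝ) : ℂ) := by
    rw [c1, eq_div_iff (by exact_mod_cast hdv.ne'), sub_mul, div_mul_cancel₀ _ (by exact_mod_cast hdv.ne')]
    push_cast; ring
  have c3 : 1 - (φ v : ℂ) * z = ((1 - z : ℝ) : ℂ) / ((1 - v * z : ℝ) : ℂ) := by
    rw [c1, eq_div_iff (by exact_mod_cast hdv.ne'), sub_mul, mul_right_comm, div_mul_cancel₀ _ (by exact_mod_cast hdv.ne')]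
    push_cast; ring
  have c4 : |-(1 - z) / (1 - v * z) ^ 2| = (1 - z) / (1 - v * z) ^ 2 := by
    rw [abs_div, abs_neg, abs_of_pos hz1', abs_of_pos (by positivity)]
  have c5 : (1 - (z : ℂ)) = ((1 - z : ℝ) : ℂ) := by push_cast; rfl
  have c6 : (1 - (v : ℂ)) = ((1 - v : ℝ) : ℂ) := by push_cast; rfl
  have c7 : (1 - (v : ℂ) * z) = ((1 - v * z : ℝ) : ℂ) := by push_cast; rfl
  rw [c2, c3, c1, c4, c5, c6, c7, div_cpow_ofReal_nonneg hv1.le hdv.le,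
    div_cpow_ofReal_nonneg (by nlinarith [hv.1]) hdv.le, div_cpow_ofReal_nonneg hz1'.le hdv.le,
    ofReal_mul, mul_cpow_ofReal_nonneg hv.1.le hz1'.le, real_smul]
  have hZ : ((1 - z : ℝ) : ℂ) ≠ 0 := by exact_mod_cast hz1'.ne'
  have hD : ((1 - v * z : ℝ) : ℂ) ≠ 0 := by exact_mod_cast hdv.ne'
  rw [ofReal_div, ofReal_pow]
  generalize ((1 - z : ℝ) : ℂ) = Z at *
  generalize ((1 - v * z : ℝ) : ℂ) = D at *
  have k1 : Z ^ (c - a - b) = Z * Z ^ (c - a - 1) * Z ^ (-b) := by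
    nth_rw 2 [← cpow_one Z]
    rw [← cpow_add _ _ hZ, ← cpow_add _ _ hZ]; congr 1; ring
  have k2 : D ^ (-(c - b)) = (D ^ 2)⁻¹ * (D ^ (a - 1))⁻¹ * (D ^ (c - a - 1))⁻¹ * (D ^ (-b))⁻¹ := by
    rw [← cpow_ofNat, ← cpow_neg, ← cpow_neg, ← cpow_neg, ← cpow_neg, ← cpow_add _ _ hD,
      ← cpow_add _ _ hD, ← cpow_add _ _ hD]; congr 1; ring
  rw [k1, k2]
  field_simp

/-! ### The generating function of the generalised Catalan coefficients -/

/-- The generalised Catalan coefficient `(c + 2n - 1 choose n)`. -/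
noncomputable def catalanCoeff (c : ℂ) (n : ℕ) : ℂ :=
  (ascPochhammer ℂ n).eval (c + n) / (n.factorial : ℂ)

/-- The coefficient is the `n`-th Taylor coefficient of `(1 + z) ^ (c + 2n - 1)` at `0`, hence given by
Cauchy's formula. -/
theorem catalanCoeff_eq_circleIntegral (c : ℂ) (n : ℕ) {R : ℝ} (h0 : 0 < R) (h1 : R < 1) :
    catalanCoeff c n = (2 * Real.pi * I : ℂ)⁻¹ *
      ∮ z in C(0, R), (z⁻¹) ^ n * (z⁻¹ * (1 + z) ^ (c + 2 * n - 1)) := by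
  set f : ℂ → ℂ := fun z => (1 + z) ^ (c + 2 * n - 1) with hf
  have hd : DifferentiableOn ℂ f (Metric.closedBall 0 R) := by
    intro z hz
    have hz1 : ‖z‖ < 1 := (mem_closedBall_zero_iff.1 hz).trans_lt h1
    refine DifferentiableAt.differentiableWithinAt ?_
    exact ((differentiableAt_id.const_add 1).cpow_const (mem_slitPlane_of_norm_lt_one hz1))
  have p1 := (hd.hasFPowerSeriesOnBall (R := ⟨R, h0.le⟩) (by exact_mod_cast h0)).hasFPowerSeriesAt
  have p2 := (one_add_cpow_hasFPowerSeriesAt_zero (a := c + 2 * n - 1))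
  have e := p2.eq_formalMultilinearSeries p1
  have e2 := congrArg (fun p => p n fun _ => (1 : ℂ)) e
  simp only [cauchyPowerSeries_apply, binomialSeries_apply] at e2
  rw [catalanCoeff, ← choose_eq_pochhammer, show c + n + n - 1 = c + 2 * n - 1 by ring]
  simp only [hf, one_div, sub_zero, smul_eq_mul, List.ofFn_const, List.prod_replicate, one_pow, mul_one] at e2
  exact e2

/-- The generating function `∑ (c + 2n - 1 choose n) xⁿ` at `x = q / (1 + q) ^ 2`: expressing the
coefficients by Cauchy's formula on a circle `|z| = R` with `q < R < 1` and summing the geometric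
series leaves an integrand whose only pole inside the circle is `z = q`. -/
theorem hasSum_catalanCoeff (c : ℂ) {q : ℝ} (hq : 0 < q) (hq1 : q < 1) :
    HasSum (fun n : ℕ => catalanCoeff c n * ((q : ℂ) / (1 + q) ^ 2) ^ n)
      ((1 + (q : ℂ)) ^ c / (1 - q)) := by
  obtain ⟨R, hqR, hR1⟩ := exists_between hq1
  have hR : 0 < R := hq.trans hqR
  set w : ℂ := (q : ℂ) / (1 + q) ^ 2 with hw
  have hqc : (1 + (q : ℂ)) ≠ 0 := by
    have : (0:ℝ) < 1 + q := by linarith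
    exact_mod_cast this.ne'
  set θ : ℝ := q / (1 + q) ^ 2 * ((1 + R) ^ 2 / R) with hθ
  have hθ0 : 0 ≤ θ := by positivity
  -- `z / (1 + z)²` is increasing on `(0, 1)` and `θ` is the quotient of its values at `q` and `R`
  have hθ1 : θ < 1 := by
    rw [hθ, div_mul_div_comm, div_lt_one (by positivity)]
    have : 0 < (R - q) * (1 - q * R) := mul_pos (by linarith) (by nlinarith)
    nlinarith
  set g₀ : ℂ → ℂ := fun z => z⁻¹ * (1 + z) ^ (c - 1) with hg₀
  have hmem (x : ℝ) : ‖circleMap 0 R x‖ = R := by simp [abs_of_pos hR]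
  have hne {z : ℂ} (hz : ‖z‖ = R) : z ≠ 0 := by
    rintro rfl; simp at hz; linarith
  have hslit {z : ℂ} (hz : ‖z‖ = R) : 1 + z ∈ slitPlane :=
    mem_slitPlane_of_norm_lt_one (by linarith)
  have hg₀c : ContinuousOn g₀ (Metric.sphere 0 R) := by
    intro z hz
    have hz : ‖z‖ = R := by simpa using hz
    refine ContinuousAt.continuousWithinAt ?_
    exact (continuousAt_inv₀ (hne hz)).mul
      (((continuousAt_const (y := (1:ℂ))).add continuousAt_id).cpow continuousAt_const (hslit hz))
  obtain ⟨M, hM⟩ := (isCompact_sphere (0 : ℂ) R).exists_bound_of_continuousOn hg₀c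
  set r : ℂ → ℂ := fun z => w * ((1 + z) ^ 2 / z) with hr
  have hrθ {z : ℂ} (hz : ‖z‖ = R) : ‖r z‖ ≤ θ := by
    have h1 : ‖1 + z‖ ≤ 1 + R := (norm_add_le _ _).trans (by simp [hz])
    have h2 : ‖(1 + (q : ℂ))‖ = 1 + q := by
      rw [show (1 + (q : ℂ)) = ((1 + q : ℝ) : ℂ) by push_cast; rfl, norm_real,
        Real.norm_of_nonneg (by linarith)]
    simp only [hr, hw, hθ, norm_mul, norm_div, norm_pow, hz, norm_real, Real.norm_of_nonneg hq.le, h2]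
    gcongr
  have hrc {z : ℂ} (hz : ‖z‖ = R) : ContinuousAt r z :=
    continuousAt_const.mul (((continuousAt_const.add continuousAt_id).pow 2).div continuousAt_id
      (hne hz))
  set F : ℕ → ℂ → ℂ := fun n z => g₀ z * r z ^ n with hF
  have hterm (n : ℕ) : catalanCoeff c n * w ^ n =
      (2 * Real.pi * I : ℂ)⁻¹ * ∮ z in C(0, R), F n z := by
    rw [catalanCoeff_eq_circleIntegral c n hR hR1, mul_assoc, mul_comm _ (w ^ n),
      ← smul_eq_mul (w ^ n), ← circleIntegral.integral_smul]
    congr 1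
    refine circleIntegral.integral_congr hR.le fun z hz => ?_
    have hz : ‖z‖ = R := by simpa using hz
    have h1z : 1 + z ≠ 0 := slitPlane_ne_zero (hslit hz)
    simp only [hF, hg₀, hr, smul_eq_mul]
    rw [show c + 2 * n - 1 = (c - 1) + ((2 * n : ℕ) : ℂ) by push_cast; ring, cpow_add _ _ h1z,
      cpow_natCast, mul_pow, div_pow ((1 + z) ^ 2), pow_mul, inv_pow]
    ring
  have hsum : HasSum (fun n => ∮ z in C(0, R), F n z) (∮ z in C(0, R), g₀ z * (1 - r z)⁻¹) := by
    simp only [circleIntegral]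
    refine intervalIntegral.hasSum_integral_of_dominated_convergence
      (fun n _ => R * (M * θ ^ n)) (fun n => ?_) (fun n => ?_) ?_ ?_ ?_
    · refine Continuous.aestronglyMeasurable ?_
      have hcm : Continuous (circleMap (0:ℂ) R) := continuous_circleMap 0 R
      have h1 : Continuous fun x => g₀ (circleMap 0 R x) :=
        hg₀c.comp_continuous hcm fun x => by simp [abs_of_pos hR]
      have h2 : Continuous fun x => r (circleMap 0 R x) := by
        rw [continuous_iff_continuousAt]
        exact fun x => ContinuousAt.comp (f := circleMap 0 R) (hrc (hmem x)) hcm.continuousAt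
      have h3 : Continuous (deriv (circleMap (0:ℂ) R)) := by
        rw [show deriv (circleMap (0:ℂ) R) = fun x => circleMap 0 R x * I from
          funext fun x => deriv_circleMap 0 R x]
        fun_prop
      exact h3.smul (h1.mul (h2.pow n))
    · refine Eventually.of_forall fun x _ => ?_
      rw [norm_smul, deriv_circleMap, norm_mul, hmem, norm_I, mul_one]
      refine mul_le_mul_of_nonneg_left ?_ hR.le
      rw [norm_mul, norm_pow]
      have := hM (circleMap 0 R x) (by simp [abs_of_pos hR])
      have h2 := pow_le_pow_left₀ (norm_nonneg _) (hrθ (hmem x)) n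
      exact mul_le_mul this h2 (by positivity) ((norm_nonneg _).trans this)
    · exact Eventually.of_forall fun x _ =>
        ((summable_geometric_of_lt_one hθ0 hθ1).mul_left M).mul_left R
    · exact intervalIntegrable_const
    · refine Eventually.of_forall fun x _ => ?_
      have := hasSum_geometric_of_norm_lt_one ((hrθ (hmem x)).trans_lt hθ1)
      simpa [smul_eq_mul] using (this.mul_left (g₀ (circleMap 0 R x))).mul_left
        (deriv (circleMap 0 R) x)
  set g : ℂ → ℂ := fun z => (1 + z) ^ (c - 1) * ((1 + q) ^ 2 / (1 - q * z)) with hg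
  have hqz {z : ℂ} (hz : ‖z‖ ≤ R) : 1 - q * z ≠ 0 := by
    intro h
    have : ‖(q : ℂ) * z‖ = 1 := by rw [← sub_eq_zero.1 h]; simp
    rw [norm_mul, norm_real, Real.norm_of_nonneg hq.le] at this
    nlinarith
  have hgd : DifferentiableOn ℂ g (Metric.closedBall 0 R) := by
    intro z hz
    have hz : ‖z‖ ≤ R := by simpa using hz
    refine DifferentiableAt.differentiableWithinAt ?_
    refine ((differentiableAt_id.const_add 1).cpow_const
      (mem_slitPlane_of_norm_lt_one (hz.trans_lt hR1))).mul ?_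
    exact (differentiableAt_const _).div ((differentiableAt_id.const_mul _).const_sub _) (hqz hz)
  have hcauchy := hgd.circleIntegral_sub_inv_smul (w := q)
    (by simpa [abs_of_pos hq] using hqR)
  have hI : ∮ z in C(0, R), g₀ z * (1 - r z)⁻¹ = ∮ z in C(0, R), (z - q)⁻¹ • g z := by
    refine circleIntegral.integral_congr hR.le fun z hz => ?_
    have hz : ‖z‖ = R := by simpa using hz
    have h0 := hne hz
    have hzq : z - q ≠ 0 := by
      intro h
      rw [sub_eq_zero.1 h, norm_real, Real.norm_of_nonneg hq.le] at hz
      linarith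
    have h2 := hqz hz.le
    have e : 1 - r z = (z - q) * (1 - q * z) / ((1 + q) ^ 2 * z) := by
      simp only [hr, hw]
      field_simp
      ring
    simp only [e, hg₀, hg, smul_eq_mul]
    field_simp
  rw [hI, hcauchy] at hsum
  have h2pi : (2 * Real.pi * I : ℂ) ≠ 0 := by simp [Real.pi_ne_zero]
  have := hsum.mul_left (2 * Real.pi * I : ℂ)⁻¹
  simp only [← hterm] at this
  rw [smul_eq_mul, inv_mul_cancel_left₀ h2pi] at this
  suffices h : (1 + (q : ℂ)) ^ c / (1 - q) = g q by rwa [h]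
  simp only [hg]
  have h1q : (1 - (q : ℂ)) ≠ 0 := by
    have : (0:ℝ) < 1 - q := by linarith
    exact_mod_cast this.ne'
  rw [cpow_sub _ _ hqc, cpow_one, show (1 - (q : ℂ) * q) = (1 - q) * (1 + q) by ring]
  field_simp

/-! ### Mehler's integral -/

/-- Duplication formula: the source of the half-integer shifted parameters of `₂F₁`. -/
theorem ascPochhammer_two_mul (A : ℂ) (n : ℕ) :
    (ascPochhammer ℂ (2 * n)).eval A =
      4 ^ n * ((ascPochhammer ℂ n).eval (A / 2) * (ascPochhammer ℂ n).eval ((A + 1) / 2)) := by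
  induction n with
  | zero => simp
  | succ n ih =>
    rw [show 2 * (n + 1) = 2 * n + 1 + 1 by ring, ascPochhammer_succ_eval, ascPochhammer_succ_eval,
      ascPochhammer_succ_eval, ascPochhammer_succ_eval, ih]
    push_cast
    ring

theorem Gamma_add_nat {a : ℂ} (ha : 0 < a.re) (n : ℕ) :
    Gamma (a + n) = (ascPochhammer ℂ n).eval a * Gamma a := by
  rw [← Gamma_add_nat_div_Gamma_eq a (ne_neg_nat_of_re_pos ha),
    div_mul_cancel₀ _ (Gamma_ne_zero_of_re_pos ha)]

/-- The interval `(0, t - √(t² - 1))`, described by the inequalities that cut it out. -/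
def mehlerSet (t : ℝ) : Set ℝ := {x | 0 < x ∧ x < 1 ∧ 0 < 1 - 2 * t * x + x ^ 2}

theorem measurableSet_mehlerSet (t : ℝ) : MeasurableSet (mehlerSet t) := by
  have h : mehlerSet t = Ioo 0 1 ∩ {x | 0 < 1 - 2 * t * x + x ^ 2} := by
    ext x; simp [mehlerSet, and_assoc]
  rw [h]
  exact measurableSet_Ioo.inter (measurableSet_lt measurable_const (by fun_prop))

/-- Every `s > 1` is `(1 + q) / (2√q)` for some `q = x²` with `0 < q < 1`, so the generating function of
`catalanCoeff` is available at `q / (1 + q)² = 1 / (4s²)`. -/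
theorem exists_mehler_root {s : ℝ} (hs : 1 < s) : ∃ x, 0 < x ∧ x < 1 ∧ 1 + x ^ 2 = 2 * s * x := by
  have h : 0 < s ^ 2 - 1 := by nlinarith
  have h1 := Real.sq_sqrt h.le
  have h2 := Real.sqrt_pos.2 h
  refine ⟨s - √(s ^ 2 - 1), ?_, ?_, ?_⟩ <;> nlinarith

/-- An integral representation of the quadratic `₂F₁` underlying `Q`: with `w = 2tx/(1+x²)` and the
generating function of `catalanCoeff` at `q = x²`, the integral becomes a series of beta
integrals. -/
theorem mehler_integral {A ν : ℂ} (hA : 0 < A.re) (hν : -(1 / 2) < ν.re) {t : ℝ} (ht : 1 < t) :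
    ∫ x in mehlerSet t, (x : ℂ) ^ (A - 1) * ((1 - 2 * t * x + x ^ 2 : ℝ) : ℂ) ^ (ν - 1 / 2) =
      Gamma (ν + 1 / 2) * (2 * t : ℂ) ^ (-A) * (Gamma A / Gamma (A + ν + 1 / 2)) *
        hyp2F1 (A / 2) ((A + 1) / 2) (A + ν + 1 / 2) (1 / (t : ℂ) ^ 2) := by
  set c := A + ν + 1 / 2 with hc
  have hν' : 0 < (ν + 1 / 2).re := by simp; linarith
  have hcre : 0 < c.re := by
    have : c.re = A.re + (ν + 1 / 2).re := by simp [hc]; ring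
    linarith
  have ht0 : 0 < t := by linarith
  set φ : ℝ → ℝ := fun x => 2 * t * x / (1 + x ^ 2) with hφ
  have hp (x : ℝ) : 0 < 1 + x ^ 2 := by positivity
  have hder : ∀ x ∈ mehlerSet t,
      HasDerivWithinAt φ (2 * t * (1 - x ^ 2) / (1 + x ^ 2) ^ 2) (mehlerSet t) x := by
    intro x hx
    have h1 : HasDerivAt (fun x : ℝ => 2 * t * x) (2 * t) x := by
      simpa using (hasDerivAt_id x).const_mul (2 * t)
    have h2 : HasDerivAt (fun x : ℝ => 1 + x ^ 2) (2 * x) x := by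
      simpa using (hasDerivAt_pow 2 x).const_add 1
    exact ((h1.div h2 (hp x).ne').congr_deriv (by ring)).hasDerivWithinAt
  have hinj : InjOn φ (mehlerSet t) := by
    intro x hx y hy h
    simp only [hφ] at h
    rw [div_eq_div_iff (hp _).ne' (hp _).ne'] at h
    have h2 : (x - y) * (1 - x * y) = 0 := by
      have : 2 * t * ((x - y) * (1 - x * y)) = 0 := by linear_combination h
      exact (mul_eq_zero.1 this).resolve_left (by positivity)
    rcases mul_eq_zero.1 h2 with h | h
    · linarith
    · nlinarith [hx.1, hx.2.1, hy.1, hy.2.1]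
  have hmaps : ∀ x ∈ mehlerSet t, φ x ∈ Ioo (0:ℝ) 1 := by
    rintro x ⟨h0, h1, h2⟩
    refine ⟨by positivity, ?_⟩
    rw [div_lt_one (hp x)]
    linarith
  have him : φ '' mehlerSet t = Ioo 0 1 := by
    refine Subset.antisymm (image_subset_iff.2 hmaps) fun w hw => ?_
    obtain ⟨x, hx0, hx1, hx⟩ := exists_mehler_root (s := t / w)
      (by rw [lt_div_iff₀ hw.1]; linarith [hw.2])
    have hx2 : w * (1 + x ^ 2) = 2 * t * x := by
      rw [hx]; field_simp [hw.1.ne']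
    refine ⟨x, ⟨hx0, hx1, ?_⟩, ?_⟩
    · nlinarith [hw.2, hp x]
    · simp only [hφ]
      rw [div_eq_iff (hp x).ne', hx2]
  set k : ℝ → ℂ := fun u => (u : ℂ) ^ (A - 1) * (1 - (u : ℂ)) ^ (ν + 1 / 2 - 1) with hk
  have hkint : IntegrableOn k (Ioo 0 1) := beta_integrable hA hν'
  set F : ℕ → ℝ → ℂ := fun n w => catalanCoeff c n * (2 * t : ℂ) ^ (-A) * (1 / (4 * t ^ 2) : ℂ) ^ n *
    ((w : ℂ) ^ (A + (2 * n : ℕ) - 1) * (1 - (w : ℂ)) ^ (ν + 1 / 2 - 1)) with hF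
  have hAn (n : ℕ) : 0 < (A + (2 * n : ℕ)).re := by
    rw [add_re, natCast_re]; positivity
  have hFi (n : ℕ) : IntegrableOn (F n) (Ioo 0 1) := (beta_integrable (hAn n) hν').const_mul _
  have hpow (n : ℕ) {u : ℝ} (hu : u ∈ Ioo (0:ℝ) 1) :
      (u : ℂ) ^ (A + (2 * n : ℕ) - 1) = (u : ℂ) ^ (A - 1) * (u : ℂ) ^ (2 * n) := by
    rw [show A + (2 * n : ℕ) - 1 = (A - 1) + (2 * n : ℕ) by ring,
      cpow_add _ _ (by exact_mod_cast hu.1.ne'), cpow_natCast]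
  have hFn (n : ℕ) : ∫ u in Ioo (0:ℝ) 1, ‖F n u‖ ≤
      ‖catalanCoeff c n * (1 / (4 * t ^ 2) : ℂ) ^ n‖ *
        (‖(2 * t : ℂ) ^ (-A)‖ * ∫ u in Ioo (0:ℝ) 1, ‖k u‖) := by
    rw [← mul_assoc, ← MeasureTheory.integral_const_mul]
    refine setIntegral_mono_on (hFi n).norm (hkint.norm.const_mul _) measurableSet_Ioo fun u hu => ?_
    have h1 : ‖(u : ℂ) ^ (2 * n)‖ ≤ 1 := by
      rw [norm_pow, norm_real, Real.norm_of_nonneg hu.1.le]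
      exact pow_le_one₀ hu.1.le hu.2.le
    simp only [hF, hk, hpow n hu, norm_mul]
    rw [mul_right_comm ‖catalanCoeff c n‖]
    refine mul_le_mul_of_nonneg_left ?_ (by positivity)
    exact mul_le_mul_of_nonneg_right (mul_le_of_le_one_right (norm_nonneg _) h1) (norm_nonneg _)
  -- `1 / (4t²)` is the value of `q / (1 + q)²` at `q = x²`, where `x` solves `1 + x² = 2tx`
  have hsum : Summable fun n => ‖catalanCoeff c n * (1 / (4 * t ^ 2) : ℂ) ^ n‖ := by
    obtain ⟨x, hx0, hx1, hx⟩ := exists_mehler_root ht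
    have := (hasSum_catalanCoeff c (q := x ^ 2) (by positivity) (by nlinarith)).summable.norm
    have hx' : (1 + ((x ^ 2 : ℝ) : ℂ)) = 2 * t * x := by exact_mod_cast hx
    have hxc : (x : ℂ) ≠ 0 := by exact_mod_cast hx0.ne'
    have htc : (t : ℂ) ≠ 0 := by exact_mod_cast ht0.ne'
    have e : (1 / (4 * t ^ 2) : ℂ) = ((x ^ 2 : ℝ) : ℂ) / (1 + ((x ^ 2 : ℝ) : ℂ)) ^ 2 := by
      rw [hx']
      push_cast
      field_simp
      norm_num
    rwa [e]
  have hs : Summable fun n => ∫ u in Ioo (0:ℝ) 1, ‖F n u‖ :=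
    Summable.of_nonneg_of_le (fun n => integral_nonneg fun u => norm_nonneg _) hFn
      (hsum.mul_right _)
  have key := hasSum_integral_of_summable_integral_norm hFi hs
  have hcv := integral_image_eq_integral_abs_deriv_smul (measurableSet_mehlerSet t) hder hinj
    (fun w => ∑' n, F n w)
  rw [him] at hcv
  have e1 : ∫ x in mehlerSet t, |2 * t * (1 - x ^ 2) / (1 + x ^ 2) ^ 2| • (∑' n, F n (φ x)) =
      ∫ x in mehlerSet t, (x : ℂ) ^ (A - 1) *
        ((1 - 2 * t * x + x ^ 2 : ℝ) : ℂ) ^ (ν - 1 / 2) := by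
    refine setIntegral_congr_fun (measurableSet_mehlerSet t) fun x hx => ?_
    have hx0 := hx.1
    have hx1 := hx.2.1
    have hq1 : 0 < 1 - x ^ 2 := by nlinarith
    have hsm := (hasSum_catalanCoeff c (q := x ^ 2) (by positivity) (by linarith)).mul_left
      ((2 * t : ℂ) ^ (-A) * k (φ x))
    have hP : ((1 + x ^ 2 : ℝ) : ℂ) ≠ 0 := by exact_mod_cast (hp x).ne'
    have htc : (t : ℂ) ≠ 0 := by exact_mod_cast ht0.ne'
    have hFe : ∀ n, F n (φ x) = (2 * t : ℂ) ^ (-A) * k (φ x) *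
        (catalanCoeff c n * (((x ^ 2 : ℝ) : ℂ) / (1 + ((x ^ 2 : ℝ) : ℂ)) ^ 2) ^ n) := by
      intro n
      have : (1 / (4 * t ^ 2) : ℂ) * (φ x : ℂ) ^ 2 =
          ((x ^ 2 : ℝ) : ℂ) / (1 + ((x ^ 2 : ℝ) : ℂ)) ^ 2 := by
        have : (1 + ((x ^ 2 : ℝ) : ℂ)) ≠ 0 := by push_cast at hP ⊢; exact hP
        simp only [hφ]
        push_cast at this ⊢
        field_simp
        norm_num
      simp only [hF, hk, hpow n (hmaps x hx), ← this, mul_pow, pow_mul]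
      ring
    simp only [hFe]
    rw [hsm.tsum_eq]
    have c1 : (φ x : ℂ) = ((2 * t : ℝ) : ℂ) * (x : ℂ) / ((1 + x ^ 2 : ℝ) : ℂ) := by
      simp [hφ]
    have c2 : 1 - (φ x : ℂ) = ((1 - 2 * t * x + x ^ 2 : ℝ) : ℂ) / ((1 + x ^ 2 : ℝ) : ℂ) := by
      rw [c1, eq_div_iff hP, sub_mul, div_mul_cancel₀ _ hP]
      push_cast; ring
    have c3 : |2 * t * (1 - x ^ 2) / (1 + x ^ 2) ^ 2| = 2 * t * (1 - x ^ 2) / (1 + x ^ 2) ^ 2 :=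
      abs_of_pos (by positivity)
    have c4 : (1 + ((x ^ 2 : ℝ) : ℂ)) = ((1 + x ^ 2 : ℝ) : ℂ) := by push_cast; rfl
    have c5 : (1 - ((x ^ 2 : ℝ) : ℂ)) = ((1 - x ^ 2 : ℝ) : ℂ) := by push_cast; rfl
    have c6 : (2 * t : ℂ) = ((2 * t : ℝ) : ℂ) := by push_cast; rfl
    simp only [hk]
    rw [c3, c2, c4, c5, c6, c1, real_smul, div_cpow_ofReal_nonneg hx.2.2.le (hp x).le,
      ← ofReal_mul, div_cpow_ofReal_nonneg (by positivity) (hp x).le, ofReal_mul (2 * t) x,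
      mul_cpow_ofReal_nonneg (by positivity) hx0.le, ofReal_div, ofReal_mul (2 * t), ofReal_pow]
    have hT : ((2 * t : ℝ) : ℂ) ≠ 0 := by exact_mod_cast (by positivity : 2 * t ≠ 0)
    have hQ : ((1 - x ^ 2 : ℝ) : ℂ) ≠ 0 := by exact_mod_cast hq1.ne'
    rw [show ν + 1 / 2 - 1 = ν - 1 / 2 by ring]
    generalize ((1 + x ^ 2 : ℝ) : ℂ) = P at *
    generalize ((2 * t : ℝ) : ℂ) = T at *
    generalize ((1 - x ^ 2 : ℝ) : ℂ) = Q at *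
    generalize ((1 - 2 * t * x + x ^ 2 : ℝ) : ℂ) = Y at *
    have k1 : T ^ (A - 1) = T ^ A / T := by rw [cpow_sub _ _ hT, cpow_one]
    have k2 : P ^ c = P ^ (A - 1) * P ^ (ν - 1 / 2) * P ^ 2 := by
      rw [← cpow_ofNat, ← cpow_add _ _ hP, ← cpow_add _ _ hP, hc]; congr 1; ring
    have k3 : T ^ A ≠ 0 := by simp [cpow_eq_zero_iff, hT]
    have k4 : P ^ (A - 1) ≠ 0 := by simp [cpow_eq_zero_iff, hP]
    have k5 : P ^ (ν - 1 / 2) ≠ 0 := by simp [cpow_eq_zero_iff, hP]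
    rw [k1, k2, cpow_neg]
    generalize ν - 1 / 2 = β at *
    field_simp
  rw [← e1, ← hcv, ← key.tsum_eq, hyp2F1, ← tsum_mul_left]
  refine tsum_congr fun n => ?_
  simp only [hF]
  rw [MeasureTheory.integral_const_mul, beta_integral (hAn n) hν', catalanCoeff,
    Gamma_add_nat hA, ascPochhammer_two_mul]
  have hcn : 0 < (c + n).re := by rw [add_re, natCast_re]; positivity
  have g1 := Gamma_add_nat hcn n
  have g2 := Gamma_add_nat hcre n
  have g3 := Gamma_ne_zero_of_re_pos hcn
  have g4 := Gamma_ne_zero_of_re_pos hcre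
  have g5 : Gamma (c + n + n) ≠ 0 := Gamma_ne_zero_of_re_pos (by rw [add_re, natCast_re]; positivity)
  rw [show A + (2 * n : ℕ) + (ν + 1 / 2) = c + n + n by rw [hc]; push_cast; ring]
  have hp1 : (ascPochhammer ℂ n).eval (c + n) ≠ 0 := fun h => g5 (by rw [g1, h, zero_mul])
  have hp2 : (ascPochhammer ℂ n).eval c ≠ 0 := fun h => g3 (by rw [g2, h, zero_mul])
  rw [g1, g2]
  have htc : (t : ℂ) ≠ 0 := by exact_mod_cast ht0.ne'
  have e4 : (1 / (4 * t ^ 2) : ℂ) ^ n * 4 ^ n = (1 / (t : ℂ) ^ 2) ^ n := by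
    rw [← mul_pow]; congr 1; field_simp
  rw [← e4]
  field_simp

/-! ### A quadratic beta integral -/

/-- The range of `g` in `rectSet` for given `p = (1 - X)(1 - Y)`: the last inequality says that the
`t`-coordinate of `rectMap (g, X, Y)` exceeds `1`. -/
def gSet (p : ℝ) : Set ℝ := {g | 0 < g ∧ g < 1 ∧ p * g ^ 2 < (1 - g) ^ 2}

theorem measurableSet_gSet (p : ℝ) : MeasurableSet (gSet p) := by
  have h : gSet p = Ioo 0 1 ∩ {g | p * g ^ 2 < (1 - g) ^ 2} := by
    ext x; simp [gSet, and_assoc]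
  rw [h]
  exact measurableSet_Ioo.inter (measurableSet_lt (by fun_prop) (by fun_prop))

theorem gSet_deriv (p : ℝ) : ∀ g ∈ gSet p, HasDerivWithinAt (fun g : ℝ => p * g ^ 2 / (1 - g) ^ 2)
    (2 * p * g / (1 - g) ^ 3) (gSet p) g := by
  rintro g ⟨hg0, hg1, -⟩
  have hg : 1 - g ≠ 0 := by linarith
  have h1 : HasDerivAt (fun g : ℝ => p * g ^ 2) (p * (2 * g)) g := by
    simpa using (hasDerivAt_pow 2 g).const_mul p
  have h2 : HasDerivAt (fun g : ℝ => (1 - g) ^ 2) (-(2 * (1 - g))) g := by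
    simpa using ((hasDerivAt_id' g).const_sub 1).fun_pow 2
  refine ((h1.div h2 (by positivity)).congr_deriv ?_).hasDerivWithinAt
  field_simp
  ring

theorem gSet_injOn {p : ℝ} (hp : 0 < p) : InjOn (fun g : ℝ => p * g ^ 2 / (1 - g) ^ 2) (gSet p) := by
  rintro g ⟨hg0, hg1, -⟩ g' ⟨hg0', hg1', -⟩ h
  have hg : 0 < 1 - g := by linarith
  have hg' : 0 < 1 - g' := by linarith
  simp only at h
  rw [div_eq_div_iff (by positivity) (by positivity)] at h
  have h2 : (g * (1 - g')) ^ 2 = (g' * (1 - g)) ^ 2 := by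
    have : p * ((g * (1 - g')) ^ 2 - (g' * (1 - g)) ^ 2) = 0 := by linear_combination h
    linarith [(mul_eq_zero.1 this).resolve_left hp.ne']
  have h3 := (pow_left_inj₀ (by positivity) (by positivity) two_ne_zero).1 h2
  linarith

theorem gSet_image {p : ℝ} (hp : 0 < p) :
    (fun g : ℝ => p * g ^ 2 / (1 - g) ^ 2) '' gSet p = Ioo 0 1 := by
  ext v
  constructor
  · rintro ⟨g, ⟨hg0, hg1, hg2⟩, rfl⟩
    have hg : 0 < 1 - g := by linarith
    exact ⟨by positivity, by simp only; rwa [div_lt_one (by positivity)]⟩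
  · rintro ⟨hv0, hv1⟩
    set s := √(v / p) with hs
    have hs0 : 0 < s := Real.sqrt_pos.2 (by positivity)
    have hs2 : s ^ 2 = v / p := Real.sq_sqrt (by positivity)
    have hps : p * s ^ 2 = v := by rw [hs2]; field_simp
    have e1 : 1 - s / (1 + s) = 1 / (1 + s) := by field_simp; ring
    refine ⟨s / (1 + s), ⟨by positivity, by rw [div_lt_one (by positivity)]; linarith, ?_⟩, ?_⟩
    · rw [e1, div_pow, div_pow, ← mul_div_assoc, hps]
      exact div_lt_div_of_pos_right (by simpa using hv1) (by positivity)
    · simp only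
      rw [e1, div_pow, div_pow, ← mul_div_assoc, hps]
      field_simp

/-- Substituting `v = p g² / (1 - g)²` turns this power function on `gSet p` into a beta
integrand. -/
theorem gSet_integrand (lam : ℂ) {p : ℝ} (hp : 0 < p) {g : ℝ} (hg : g ∈ gSet p) :
    (g : ℂ) ^ (-2 * lam) * (((1 - g) ^ 2 - p * g ^ 2 : ℝ) : ℂ) ^ (lam - 1) =
      (1 / 2 * (p : ℂ) ^ (lam - 1 / 2)) * (|2 * p * g / (1 - g) ^ 3| •
        (((p * g ^ 2 / (1 - g) ^ 2 : ℝ) : ℂ) ^ (1 / 2 - lam - 1) *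
          (1 - ((p * g ^ 2 / (1 - g) ^ 2 : ℝ) : ℂ)) ^ (lam - 1))) := by
  obtain ⟨hg0, hg1, hg2⟩ := hg
  have hh : 0 < 1 - g := by linarith
  have hW : 0 < (1 - g) ^ 2 - p * g ^ 2 := by linarith
  have c1 : 1 - ((p * g ^ 2 / (1 - g) ^ 2 : ℝ) : ℂ) =
      (((1 - g) ^ 2 - p * g ^ 2 : ℝ) : ℂ) / (((1 - g) ^ 2 : ℝ) : ℂ) := by
    rw [← ofReal_one, ← ofReal_sub, ← ofReal_div]
    congr 1
    field_simp
  rw [c1, abs_of_pos (by positivity), real_smul, ofReal_div (p * g ^ 2),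
    div_cpow_ofReal_nonneg (by positivity) (by positivity),
    div_cpow_ofReal_nonneg (by positivity) (by positivity), ofReal_mul p,
    mul_cpow_ofReal_nonneg hp.le (by positivity), ofReal_div (2 * p * g), ofReal_mul (2 * p),
    ofReal_mul 2 p]
  have sq {x : ℝ} (hx : 0 < x) (a : ℂ) : ((x ^ 2 : ℝ) : ℂ) ^ a = (x : ℂ) ^ (2 * a) := by
    rw [show (2 * a) = a * (2:ℕ) by push_cast; ring, cpow_mul_nat, pow_two, pow_two, ofReal_mul,
      mul_cpow_ofReal_nonneg hx.le hx.le]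
  rw [sq hg0, sq hh, sq hh, ofReal_pow]
  have hpc : (p : ℂ) ≠ 0 := by exact_mod_cast hp.ne'
  have hgc : (g : ℂ) ≠ 0 := by exact_mod_cast hg0.ne'
  have hhc : ((1 - g : ℝ) : ℂ) ≠ 0 := by exact_mod_cast hh.ne'
  generalize ((1 - g : ℝ) : ℂ) = H at *
  generalize (((1 - g) ^ 2 - p * g ^ 2 : ℝ) : ℂ) = W at *
  generalize (p : ℂ) = P at *
  generalize (g : ℂ) = G at *
  have k1 : P ^ (1 / 2 - lam - 1) = (P ^ (lam - 1 / 2))⁻¹ / P := by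
    rw [cpow_sub _ _ hpc, cpow_one, ← cpow_neg]; congr 2; ring
  have k2 : G ^ (2 * (1 / 2 - lam - 1)) = G ^ (-2 * lam) / G := by
    rw [show 2 * (1 / 2 - lam - 1) = -2 * lam - 1 by ring, cpow_sub _ _ hgc, cpow_one]
  have k3 : H ^ (2 * (1 / 2 - lam - 1)) * H ^ (2 * (lam - 1)) = (H ^ 3)⁻¹ := by
    rw [← cpow_add _ _ hhc, ← cpow_ofNat, ← cpow_neg]; congr 1; ring
  have k4 : P ^ (lam - 1 / 2) ≠ 0 := by simp [cpow_eq_zero_iff, hpc]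
  have k5 : H ^ (2 * (1 / 2 - lam - 1)) ≠ 0 := by simp [cpow_eq_zero_iff, hhc]
  have k6 : H ^ (2 * (lam - 1)) ≠ 0 := by simp [cpow_eq_zero_iff, hhc]
  have k7 : H ^ (2 * (lam - 1)) = (H ^ 3)⁻¹ * (H ^ (2 * (1 / 2 - lam - 1)))⁻¹ := by
    exact (eq_mul_inv_iff_mul_eq₀ k5).2 (by rw [mul_comm, k3])
  rw [k1, k2, k7]
  push_cast
  generalize H ^ (2 * (1 / 2 - lam - 1)) = H' at *
  generalize P ^ (lam - 1 / 2) = P' at *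
  generalize W ^ (lam - 1) = W' at *
  generalize G ^ (-2 * lam) = G' at *
  field_simp

theorem gSet_integrable {lam : ℂ} (h0 : 0 < lam.re) (h1 : lam.re < 1 / 2) {p : ℝ} (hp : 0 < p) :
    IntegrableOn (fun g : ℝ => (g : ℂ) ^ (-2 * lam) *
      (((1 - g) ^ 2 - p * g ^ 2 : ℝ) : ℂ) ^ (lam - 1)) (gSet p) := by
  have hb := beta_integrable (u := 1 / 2 - lam) (v := lam) (by simp; linarith) h0
  rw [← gSet_image hp, integrableOn_image_iff_integrableOn_abs_deriv_smul (measurableSet_gSet p)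
    (gSet_deriv p) (gSet_injOn hp)] at hb
  exact IntegrableOn.congr_fun (hb.const_mul (1 / 2 * (p : ℂ) ^ (lam - 1 / 2)))
    (fun g hg => (gSet_integrand lam hp hg).symm) (measurableSet_gSet p)

theorem gSet_integral {lam : ℂ} (h0 : 0 < lam.re) (h1 : lam.re < 1 / 2) {p : ℝ} (hp : 0 < p) :
    ∫ g in gSet p, (g : ℂ) ^ (-2 * lam) * (((1 - g) ^ 2 - p * g ^ 2 : ℝ) : ℂ) ^ (lam - 1) =
      1 / 2 * (p : ℂ) ^ (lam - 1 / 2) * (Gamma (1 / 2 - lam) * Gamma lam / Gamma (1 / 2)) := by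
  have hb := beta_integral (u := 1 / 2 - lam) (v := lam) (by simp; linarith) h0
  rw [← gSet_image hp, integral_image_eq_integral_abs_deriv_smul (measurableSet_gSet p)
    (gSet_deriv p) (gSet_injOn hp), sub_add_cancel] at hb
  rw [← hb, ← MeasureTheory.integral_const_mul]
  exact setIntegral_congr_fun (measurableSet_gSet p) fun g hg => gSet_integrand lam hp hg

/-- The bound by which Tonelli's theorem gives the integrability of `rectIntegrand`. -/
theorem gSet_integral_norm (lam : ℂ) {p : ℝ} (hp : 0 < p) :
    ∫ g in gSet p, ‖(g : ℂ) ^ (-2 * lam) * (((1 - g) ^ 2 - p * g ^ 2 : ℝ) : ℂ) ^ (lam - 1)‖ =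
      ‖1 / 2 * (p : ℂ) ^ (lam - 1 / 2)‖ *
        ∫ v in Ioo (0:ℝ) 1, ‖(v : ℂ) ^ (1 / 2 - lam - 1) * (1 - (v : ℂ)) ^ (lam - 1)‖ := by
  rw [← gSet_image hp, integral_image_eq_integral_abs_deriv_smul (measurableSet_gSet p)
    (gSet_deriv p) (gSet_injOn hp), ← MeasureTheory.integral_const_mul]
  refine setIntegral_congr_fun (measurableSet_gSet p) fun g hg => ?_
  rw [gSet_integrand lam hp hg, norm_mul, norm_smul, Real.norm_eq_abs, abs_abs, smul_eq_mul]

/-! ### The rectifying change of variables -/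

/-- The domain of the coordinates `(g, X, Y)`, which `rectMap` maps bijectively onto
`mehlerSet₃`. -/
def rectSet : Set (ℝ × ℝ × ℝ) :=
  {p | (0 < p.2.1 ∧ p.2.1 < 1) ∧ (0 < p.2.2 ∧ p.2.2 < 1) ∧ p.1 ∈ gSet ((1 - p.2.1) * (1 - p.2.2))}

/-- The region of all `(t, x, y)` with `1 < t` and `x`, `y` in the Mehler range of `t`. -/
def mehlerSet₃ : Set (ℝ × ℝ × ℝ) :=
  {p | 1 < p.1 ∧ p.2.1 ∈ mehlerSet p.1 ∧ p.2.2 ∈ mehlerSet p.1}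

/-- The rectifying change of variables `(g, X, Y) ↦ (t, gX, gY)`, where `t` is chosen so that
`1 - 2tx + x² = (1 - X)(1 - XYg²)` and `1 - 2ty + y² = (1 - Y)(1 - XYg²)`. -/
noncomputable def rectMap (p : ℝ × ℝ × ℝ) : ℝ × ℝ × ℝ :=
  (((1 - p.2.1 * p.2.2 * p.1 ^ 2) / p.1 + (p.2.1 + p.2.2) * p.1) / 2, p.1 * p.2.1, p.1 * p.2.2)

theorem measurableSet_rectSet : MeasurableSet rectSet := by
  have h : rectSet = ({p | 0 < p.2.1} ∩ {p | p.2.1 < 1}) ∩ (({p | 0 < p.2.2} ∩ {p | p.2.2 < 1}) ∩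
      ({p | 0 < p.1} ∩ ({p | p.1 < 1} ∩
        {p | (1 - p.2.1) * (1 - p.2.2) * p.1 ^ 2 < (1 - p.1) ^ 2}))) := rfl
  rw [h]
  repeat' apply MeasurableSet.inter
  all_goals exact measurableSet_lt (by fun_prop) (by fun_prop)

theorem measurableSet_mehlerSet₃ : MeasurableSet mehlerSet₃ := by
  have h : mehlerSet₃ = {p | 1 < p.1} ∩
      (({p | 0 < p.2.1} ∩ ({p | p.2.1 < 1} ∩ {p | 0 < 1 - 2 * p.1 * p.2.1 + p.2.1 ^ 2})) ∩
       ({p | 0 < p.2.2} ∩ ({p | p.2.2 < 1} ∩ {p | 0 < 1 - 2 * p.1 * p.2.2 + p.2.2 ^ 2}))) := rfl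
  rw [h]
  repeat' apply MeasurableSet.inter
  all_goals exact measurableSet_lt (by fun_prop) (by fun_prop)

theorem rectMap_eqs {g X Y : ℝ} (hg : 0 < g) :
    1 - 2 * (rectMap (g, X, Y)).1 * (g * X) + (g * X) ^ 2 = (1 - X) * (1 - X * Y * g ^ 2) ∧
    1 - 2 * (rectMap (g, X, Y)).1 * (g * Y) + (g * Y) ^ 2 = (1 - Y) * (1 - X * Y * g ^ 2) ∧
    (rectMap (g, X, Y)).1 - 1 = ((1 - g) ^ 2 - (1 - X) * (1 - Y) * g ^ 2) / (2 * g) := by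
  simp only [rectMap]
  refine ⟨?_, ?_, ?_⟩ <;> field_simp <;> ring

theorem rectSet_pos {g X Y : ℝ} (h : (g, X, Y) ∈ rectSet) : 0 < 1 - X * Y * g ^ 2 := by
  obtain ⟨⟨hX0, hX1⟩, ⟨hY0, hY1⟩, hg0, hg1, -⟩ := h
  simp only at *
  have h1 : X * Y < 1 := mul_lt_one_of_nonneg_of_lt_one_left hX0.le hX1 hY1.le
  have h2 : X * Y * g ^ 2 < 1 :=
    mul_lt_one_of_nonneg_of_lt_one_left (by positivity) h1 (pow_le_one₀ hg0.le hg1.le)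
  linarith

theorem rectMap_image : rectMap '' rectSet = mehlerSet₃ := by
  ext ⟨t, x, y⟩
  constructor
  · rintro ⟨⟨g, X, Y⟩, h, he⟩
    have hU := rectSet_pos h
    obtain ⟨⟨hX0, hX1⟩, ⟨hY0, hY1⟩, hg0, hg1, hg2⟩ := h
    simp only at *
    obtain ⟨e1, e2, e3⟩ := rectMap_eqs (X := X) (Y := Y) hg0
    have ht : (rectMap (g, X, Y)).1 = t := by rw [he]
    have hx : g * X = x := congrArg (fun p => p.2.1) he
    have hy : g * Y = y := congrArg (fun p => p.2.2) he
    rw [ht] at e1 e2 e3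
    rw [hx] at e1
    rw [hy] at e2
    refine ⟨?_, ⟨?_, ?_, ?_⟩, ?_, ?_, ?_⟩ <;> simp only
    · have : 0 < t - 1 := by rw [e3]; exact div_pos (by linarith) (by linarith)
      linarith
    · rw [← hx]; positivity
    · rw [← hx]; nlinarith
    · rw [e1]; exact mul_pos (by linarith) hU
    · rw [← hy]; positivity
    · rw [← hy]; nlinarith
    · rw [e2]; exact mul_pos (by linarith) hU
  · rintro ⟨ht, ⟨hx0, hx1, hx2⟩, hy0, hy1, hy2⟩
    simp only at *
    have hxy : 0 < 1 - x * y := by nlinarith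
    have hd : 0 < 2 * t - x - y := by linarith
    -- for `x = gX`, `y = gY` the definition of `t` reads `g (2t - x - y) = 1 - xy`
    obtain ⟨g, hg⟩ : ∃ g, g = (1 - x * y) / (2 * t - x - y) := ⟨_, rfl⟩
    have hgd : g * (2 * t - x - y) = 1 - x * y := by rw [hg]; field_simp
    have hg0 : 0 < g := by rw [hg]; positivity
    have hg1 : g < 1 := by rw [hg, div_lt_one hd]; nlinarith
    have hxg : x < g := by rw [hg, lt_div_iff₀ hd]; nlinarith
    have hyg : y < g := by rw [hg, lt_div_iff₀ hd]; nlinarith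
    refine ⟨(g, x / g, y / g), ⟨⟨by positivity, by rwa [div_lt_one hg0]⟩,
      ⟨by positivity, by rwa [div_lt_one hg0]⟩, hg0, hg1, ?_⟩, ?_⟩
    · simp only
      have : (1 - x / g) * (1 - y / g) * g ^ 2 = (g - x) * (g - y) := by field_simp
      rw [this]
      nlinarith
    · simp only [rectMap]
      refine Prod.ext ?_ (Prod.ext ?_ ?_) <;> simp only
      · field_simp
        linear_combination -hgd
      · field_simp
      · field_simp

theorem rectMap_injOn : InjOn rectMap rectSet := by
  rintro ⟨g, X, Y⟩ h ⟨g', X', Y'⟩ h' he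
  have hE : rectMap (g, X, Y) ∈ mehlerSet₃ := rectMap_image ▸ mem_image_of_mem _ h
  obtain ⟨ht, hx, hy⟩ := hE
  have key {g X Y : ℝ} (hg : 0 < g) : g * (2 * (rectMap (g, X, Y)).1 - g * X - g * Y) =
      1 - (g * X) * (g * Y) := by
    simp only [rectMap]; field_simp; ring
  have hg : 0 < g := h.2.2.1
  have hg' : 0 < g' := h'.2.2.1
  have k1 := key (X := X) (Y := Y) hg
  have k2 := key (X := X') (Y := Y') hg'
  have hX : g * X = g' * X' := congrArg (fun p => p.2.1) he
  have hY : g * Y = g' * Y' := congrArg (fun p => p.2.2) he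
  rw [← he, ← hX, ← hY] at k2
  have hx1 : g * X < 1 := hx.2.1
  have hy1 : g * Y < 1 := hy.2.1
  have hgg : g = g' := by
    have hd : 0 < 2 * (rectMap (g, X, Y)).1 - g * X - g * Y := by linarith
    exact mul_right_cancel₀ hd.ne' (k1.trans k2.symm)
  subst hgg
  rw [mul_left_cancel₀ hg.ne' hX, mul_left_cancel₀ hg.ne' hY]

/-- The continuous linear map with rows `(a, b, c)`, `(X, g, 0)` and `(Y, 0, g)`. -/
noncomputable def rectDeriv (a b c g X Y : ℝ) : ℝ × ℝ × ℝ →L[ℝ] ℝ × ℝ × ℝ :=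
  (a • ContinuousLinearMap.fst ℝ ℝ (ℝ × ℝ) +
    b • (ContinuousLinearMap.fst ℝ ℝ ℝ).comp (ContinuousLinearMap.snd ℝ ℝ (ℝ × ℝ)) +
    c • (ContinuousLinearMap.snd ℝ ℝ ℝ).comp (ContinuousLinearMap.snd ℝ ℝ (ℝ × ℝ))).prod
  ((X • ContinuousLinearMap.fst ℝ ℝ (ℝ × ℝ) +
    g • (ContinuousLinearMap.fst ℝ ℝ ℝ).comp (ContinuousLinearMap.snd ℝ ℝ (ℝ × ℝ))).prod
  (Y • ContinuousLinearMap.fst ℝ ℝ (ℝ × ℝ) +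
    g • (ContinuousLinearMap.snd ℝ ℝ ℝ).comp (ContinuousLinearMap.snd ℝ ℝ (ℝ × ℝ))))

theorem rectDeriv_det (a b c g X Y : ℝ) :
    (rectDeriv a b c g X Y).det = a * g ^ 2 - b * X * g - c * Y * g := by
  let e : (ℝ × ℝ × ℝ) ≃ₗ[ℝ] (Fin 3 → ℝ) :=
    { toFun := fun p => ![p.1, p.2.1, p.2.2]
      invFun := fun v => (v 0, v 1, v 2)
      map_add' := fun p q => by ext i; fin_cases i <;> simp
      map_smul' := fun r p => by ext i; fin_cases i <;> simp
      left_inv := fun p => by simp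
      right_inv := fun v => by ext i; fin_cases i <;> simp }
  have hb : ∀ j, Module.Basis.ofEquivFun e j =
      ((Pi.single j 1 : Fin 3 → ℝ) 0, (Pi.single j 1 : Fin 3 → ℝ) 1,
        (Pi.single j 1 : Fin 3 → ℝ) 2) := fun j => by
    rw [Module.Basis.coe_ofEquivFun]; rfl
  have he : ∀ p i, e p i = ![p.1, p.2.1, p.2.2] i := fun _ _ => rfl
  have h := LinearMap.det_toMatrix (Module.Basis.ofEquivFun e) (rectDeriv a b c g X Y).toLinearMap
  rw [ContinuousLinearMap.det, ← h, Matrix.det_fin_three]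
  simp only [LinearMap.toMatrix_apply, hb, Module.Basis.ofEquivFun_repr_apply, he]
  simp [rectDeriv]
  ring

theorem rectMap_hasFDerivAt {p : ℝ × ℝ × ℝ} (hp : p.1 ≠ 0) : HasFDerivAt rectMap
    (rectDeriv ((-1 / p.1 ^ 2 - p.2.1 * p.2.2 + p.2.1 + p.2.2) / 2) ((p.1 - p.2.2 * p.1) / 2)
      ((p.1 - p.2.1 * p.1) / 2) p.1 p.2.1 p.2.2) p := by
  have h1 : HasFDerivAt (fun p : ℝ × ℝ × ℝ => p.1) (ContinuousLinearMap.fst ℝ ℝ (ℝ × ℝ)) p :=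
    hasFDerivAt_fst
  have h2 : HasFDerivAt (fun p : ℝ × ℝ × ℝ => p.2.1)
    ((ContinuousLinearMap.fst ℝ ℝ ℝ).comp (ContinuousLinearMap.snd ℝ ℝ (ℝ × ℝ))) p :=
    hasFDerivAt_fst.comp p hasFDerivAt_snd
  have h3 : HasFDerivAt (fun p : ℝ × ℝ × ℝ => p.2.2)
    ((ContinuousLinearMap.snd ℝ ℝ ℝ).comp (ContinuousLinearMap.snd ℝ ℝ (ℝ × ℝ))) p :=
    hasFDerivAt_snd.comp p hasFDerivAt_snd
  have hi : HasFDerivAt (fun p : ℝ × ℝ × ℝ => p.1⁻¹)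
      ((-(p.1 ^ 2)⁻¹) • ContinuousLinearMap.fst ℝ ℝ (ℝ × ℝ)) p :=
    (hasDerivAt_inv hp).comp_hasFDerivAt p h1
  have hm := (((((h2.mul h3).mul (h1.pow 2)).const_sub 1).mul hi).add ((h2.add h3).mul h1)).mul_const
    (1 / 2)
  have := hm.prodMk ((h1.mul h2).prodMk (h1.mul h3))
  refine (this.congr_fderiv ?_).congr_of_eventuallyEq (Eventually.of_forall fun q => ?_)
  · ext <;> simp [rectDeriv] <;> field_simp <;> ring
  · simp only [rectMap, div_eq_mul_inv]
    simp

/-! ### The triple integral -/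

/-- The integrand of Mehler's integral, see `mehler_integral`. -/
noncomputable def mehlerIntegrand (A ν : ℂ) (t x : ℝ) : ℂ :=
  (x : ℂ) ^ (A - 1) * ((1 - 2 * t * x + x ^ 2 : ℝ) : ℂ) ^ (ν - 1 / 2)

/-- The integrand in `(t, x, y)` obtained by writing both Legendre functions as Mehler integrals. -/
noncomputable def tripleIntegrand (lam ν A A' : ℂ) (p : ℝ × ℝ × ℝ) : ℂ :=
  ((p.1 - 1 : ℝ) : ℂ) ^ (lam - 1) *
    (mehlerIntegrand A ν p.1 p.2.1 * mehlerIntegrand A' (-ν) p.1 p.2.2)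

/-- The pullback of `tripleIntegrand` under `rectMap`, Jacobian included. -/
noncomputable def rectIntegrand (lam ν A A' : ℂ) (p : ℝ × ℝ × ℝ) : ℂ :=
  2 ^ (-lam) * (((p.2.1 : ℂ) ^ (A - 1) * ((1 - p.2.1 : ℝ) : ℂ) ^ (ν - 1 / 2)) *
    ((p.2.2 : ℂ) ^ (A' - 1) * ((1 - p.2.2 : ℝ) : ℂ) ^ (-ν - 1 / 2))) *
    ((p.1 : ℂ) ^ (-2 * lam) *
      (((1 - p.1) ^ 2 - (1 - p.2.1) * (1 - p.2.2) * p.1 ^ 2 : ℝ) : ℂ) ^ (lam - 1))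

/-- The two Mehler factors contribute the power `(ν - 1/2) + (-ν - 1/2) = -1` of `1 - XYg²`, which
the Jacobian `(1 - XYg²) / 2` cancels; `A + A' = 1 - lam` makes the remaining power of `g` equal to
`-2 * lam`. -/
theorem rectIntegrand_eq {lam ν A A' : ℂ} (hA : A + A' = 1 - lam) {p : ℝ × ℝ × ℝ}
    (hp : p ∈ rectSet) :
    |(rectDeriv ((-1 / p.1 ^ 2 - p.2.1 * p.2.2 + p.2.1 + p.2.2) / 2) ((p.1 - p.2.2 * p.1) / 2)
      ((p.1 - p.2.1 * p.1) / 2) p.1 p.2.1 p.2.2).det| • tripleIntegrand lam ν A A' (rectMap p) =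
      rectIntegrand lam ν A A' p := by
  obtain ⟨g, X, Y⟩ := p
  have hU := rectSet_pos hp
  obtain ⟨⟨hX0, hX1⟩, ⟨hY0, hY1⟩, hg0, hg1, hg2⟩ := hp
  simp only at *
  obtain ⟨e1, e2, e3⟩ := rectMap_eqs (X := X) (Y := Y) hg0
  have hdet : (-1 / g ^ 2 - X * Y + X + Y) / 2 * g ^ 2 - (g - Y * g) / 2 * X * g -
      (g - X * g) / 2 * Y * g = -((1 - X * Y * g ^ 2) / 2) := by
    field_simp; ring
  have hW : 0 < (1 - g) ^ 2 - (1 - X) * (1 - Y) * g ^ 2 := by linarith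
  have hX1' : 0 < 1 - X := by linarith
  have hY1' : 0 < 1 - Y := by linarith
  rw [rectDeriv_det, hdet, abs_neg, abs_of_pos (by positivity), real_smul]
  simp only [tripleIntegrand, mehlerIntegrand, rectIntegrand]
  have f1 : (rectMap (g, X, Y)).2.1 = g * X := rfl
  have f2 : (rectMap (g, X, Y)).2.2 = g * Y := rfl
  rw [f1, f2, e1, e2, e3, ofReal_mul g, ofReal_mul g, mul_cpow_ofReal_nonneg hg0.le hX0.le,
    mul_cpow_ofReal_nonneg hg0.le hY0.le, ofReal_mul (1 - X), ofReal_mul (1 - Y),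
    mul_cpow_ofReal_nonneg hX1'.le hU.le, mul_cpow_ofReal_nonneg hY1'.le hU.le,
    ofReal_div, ofReal_div, div_cpow_ofReal_nonneg hW.le (by positivity), ofReal_mul 2 g,
    mul_cpow_ofReal_nonneg (by norm_num) hg0.le]
  have hUc : ((1 - X * Y * g ^ 2 : ℝ) : ℂ) ≠ 0 := by exact_mod_cast hU.ne'
  have hgc : (g : ℂ) ≠ 0 := by exact_mod_cast hg0.ne'
  have h2 : (2 : ℂ) ≠ 0 := two_ne_zero
  generalize ((1 - X * Y * g ^ 2 : ℝ) : ℂ) = U at *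
  generalize ((1 - X : ℝ) : ℂ) ^ (ν - 1 / 2) = X' at *
  generalize ((1 - Y : ℝ) : ℂ) ^ (-ν - 1 / 2) = Y' at *
  generalize ((((1 - g) ^ 2 - (1 - X) * (1 - Y) * g ^ 2 : ℝ)) : ℂ) ^ (lam - 1) = W at *
  generalize (g : ℂ) = G at *
  generalize (X : ℂ) ^ (A - 1) = X'' at *
  generalize (Y : ℂ) ^ (A' - 1) = Y'' at *
  push_cast
  have k1 : U ^ (-ν - 1 / 2) = (U ^ (ν - 1 / 2))⁻¹ * U⁻¹ := by
    rw [← cpow_neg, ← cpow_neg_one, ← cpow_add _ _ hUc]; congr 1; ring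
  have k2 : G ^ (A - 1) * G ^ (A' - 1) = G ^ (-2 * lam) * G ^ (lam - 1) := by
    rw [← cpow_add _ _ hgc, ← cpow_add _ _ hgc]; congr 1; linear_combination hA
  have k3 : (2 : ℂ) ^ (-lam) = (2 ^ (lam - 1))⁻¹ / 2 := by
    rw [← cpow_neg, div_eq_mul_inv, ← cpow_neg_one, ← cpow_add _ _ h2]; congr 1; ring
  have k4 : U ^ (ν - 1 / 2) ≠ 0 := by simp [cpow_eq_zero_iff, hUc]
  have k5 : (2 : ℂ) ^ (lam - 1) ≠ 0 := by simp [cpow_eq_zero_iff]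
  have k6 : G ^ (lam - 1) ≠ 0 := by simp [cpow_eq_zero_iff, hgc]
  rw [k1, k3]
  generalize U ^ (ν - 1 / 2) = U' at *
  generalize (2 : ℂ) ^ (lam - 1) = T at *
  generalize G ^ (lam - 1) = G' at *
  generalize G ^ (-2 * lam) = G'' at *
  generalize G ^ (A - 1) = G1 at *
  generalize G ^ (A' - 1) = G2 at *
  field_simp
  linear_combination (W * X' * X'' * Y' * Y'' ) * k2

theorem isAddHaarMeasure_volume₃ : (volume : Measure (ℝ × ℝ × ℝ)).IsAddHaarMeasure := by
  have : (volume : Measure (ℝ × ℝ)).IsAddHaarMeasure :=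
    inferInstanceAs ((volume : Measure ℝ).prod (volume : Measure ℝ)).IsAddHaarMeasure
  exact inferInstanceAs ((volume : Measure ℝ).prod (volume : Measure (ℝ × ℝ))).IsAddHaarMeasure

section
variable {lam ν A A' : ℂ} (hA : 0 < A.re) (hA' : 0 < A'.re) (h1 : 0 < (ν + lam).re)
  (h2 : 0 < (lam - ν).re) (h3 : lam.re < 1 / 2)

theorem measurable_rectIntegrand : Measurable (rectIntegrand lam ν A A') := by
  unfold rectIntegrand
  fun_prop

theorem measurable_tripleIntegrand : Measurable (tripleIntegrand lam ν A A') := by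
  unfold tripleIntegrand mehlerIntegrand
  fun_prop

theorem indicator_rectSet (g X Y : ℝ) :
    rectSet.indicator (rectIntegrand lam ν A A') (g, X, Y) =
    (2 ^ (-lam) * ((Ioo (0:ℝ) 1).indicator (fun X : ℝ => (X : ℂ) ^ (A - 1) *
        ((1 - X : ℝ) : ℂ) ^ (ν - 1 / 2)) X *
      (Ioo (0:ℝ) 1).indicator (fun Y : ℝ => (Y : ℂ) ^ (A' - 1) *
        ((1 - Y : ℝ) : ℂ) ^ (-ν - 1 / 2)) Y)) *
      (gSet ((1 - X) * (1 - Y))).indicator (fun g : ℝ => (g : ℂ) ^ (-2 * lam) *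
        (((1 - g) ^ 2 - (1 - X) * (1 - Y) * g ^ 2 : ℝ) : ℂ) ^ (lam - 1)) g := by
  by_cases hX : X ∈ Ioo (0:ℝ) 1
  · by_cases hY : Y ∈ Ioo (0:ℝ) 1
    · by_cases hg : g ∈ gSet ((1 - X) * (1 - Y))
      · have : (g, X, Y) ∈ rectSet := ⟨hX, hY, hg⟩
        rw [indicator_of_mem this, indicator_of_mem hX, indicator_of_mem hY, indicator_of_mem hg]
        rfl
      · have : (g, X, Y) ∉ rectSet := fun h => hg h.2.2
        rw [indicator_of_notMem this, indicator_of_notMem hg, mul_zero]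
    · have : (g, X, Y) ∉ rectSet := fun h => hY h.2.1
      rw [indicator_of_notMem this, indicator_of_notMem hY]; simp
  · have : (g, X, Y) ∉ rectSet := fun h => hX h.1
    rw [indicator_of_notMem this, indicator_of_notMem hX]; simp

/-- By `gSet_integral`, integrating out `g` adds `lam - 1/2` to the exponents of `1 - X` and `1 - Y`. -/
theorem rect_factor (a b e : ℂ) (X Y : ℝ) :
    ((Ioo (0:ℝ) 1).indicator (fun X : ℝ => (X : ℂ) ^ (a - 1) *
        ((1 - X : ℝ) : ℂ) ^ (e - 1 / 2)) X *
      (Ioo (0:ℝ) 1).indicator (fun Y : ℝ => (Y : ℂ) ^ (b - 1) *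
        ((1 - Y : ℝ) : ℂ) ^ (-e - 1 / 2)) Y) * (((1 - X) * (1 - Y) : ℝ) : ℂ) ^ (lam - 1 / 2) =
    (Ioo (0:ℝ) 1).indicator (fun X : ℝ => (X : ℂ) ^ (a - 1) * (1 - (X : ℂ)) ^ (e + lam - 1)) X *
    (Ioo (0:ℝ) 1).indicator (fun Y : ℝ => (Y : ℂ) ^ (b - 1) * (1 - (Y : ℂ)) ^ (lam - e - 1)) Y := by
  by_cases hX : X ∈ Ioo (0:ℝ) 1
  · by_cases hY : Y ∈ Ioo (0:ℝ) 1
    · have hx : 0 < 1 - X := by linarith [hX.2]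
      have hy : 0 < 1 - Y := by linarith [hY.2]
      have hxc : (1 - (X:ℂ)) ≠ 0 := by exact_mod_cast hx.ne'
      have hyc : (1 - (Y:ℂ)) ≠ 0 := by exact_mod_cast hy.ne'
      simp only [indicator_of_mem hX, indicator_of_mem hY]
      rw [ofReal_mul, mul_cpow_ofReal_nonneg hx.le hy.le]
      push_cast
      rw [show e + lam - 1 = (e - 1 / 2) + (lam - 1 / 2) by ring,
        show lam - e - 1 = (-e - 1 / 2) + (lam - 1 / 2) by ring, cpow_add _ _ hxc,
        cpow_add _ _ hyc]
      ring
    · simp [indicator_of_notMem hY]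
  · simp [indicator_of_notMem hX]

include hA hA' h1 h2 h3

theorem integrable_rect : Integrable (rectSet.indicator (rectIntegrand lam ν A A')) := by
  have h0 : 0 < lam.re := by simp only [add_re, sub_re] at *; linarith
  have hm : AEStronglyMeasurable (rectSet.indicator (rectIntegrand lam ν A A'))
      ((volume : Measure ℝ).prod (volume : Measure (ℝ × ℝ))) :=
    (measurable_rectIntegrand.indicator measurableSet_rectSet).aestronglyMeasurable
  have hb1 := (integrable_indicator_iff measurableSet_Ioo).2 (beta_integrable hA h1)
  have hb2 := (integrable_indicator_iff measurableSet_Ioo).2 (beta_integrable hA' h2)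
  refine (integrable_prod_iff' hm).2 ⟨Eventually.of_forall ?_, ?_⟩
  · rintro ⟨X, Y⟩
    simp only [indicator_rectSet]
    by_cases hXY : X ∈ Ioo (0:ℝ) 1 ∧ Y ∈ Ioo (0:ℝ) 1
    · refine Integrable.const_mul ?_ _
      refine (integrable_indicator_iff (measurableSet_gSet _)).2 (gSet_integrable h0 h3 ?_)
      exact mul_pos (by linarith [hXY.1.2]) (by linarith [hXY.2.2])
    · have : (Ioo (0:ℝ) 1).indicator (fun X : ℝ => (X : ℂ) ^ (A - 1) *
        ((1 - X : ℝ) : ℂ) ^ (ν - 1 / 2)) X * (Ioo (0:ℝ) 1).indicator (fun Y : ℝ =>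
          (Y : ℂ) ^ (A' - 1) * ((1 - Y : ℝ) : ℂ) ^ (-ν - 1 / 2)) Y = 0 := by
        rcases not_and_or.1 hXY with h | h <;> simp [indicator_of_notMem h]
      simp only [this, mul_zero, zero_mul]
      exact integrable_zero _ _ _
  · obtain ⟨K, hK⟩ : ∃ K, ∫ v in Ioo (0:ℝ) 1,
        ‖(v : ℂ) ^ (1 / 2 - lam - 1) * (1 - (v : ℂ)) ^ (lam - 1)‖ = K := ⟨_, rfl⟩
    refine (((hb1.norm.mul_prod hb2.norm).const_mul (‖(2:ℂ) ^ (-lam)‖ * ‖(1 / 2 : ℂ)‖ * K))).congr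
      (Eventually.of_forall ?_)
    rintro ⟨X, Y⟩
    simp only [indicator_rectSet]
    by_cases hXY : X ∈ Ioo (0:ℝ) 1 ∧ Y ∈ Ioo (0:ℝ) 1
    · have hp : 0 < (1 - X) * (1 - Y) := mul_pos (by linarith [hXY.1.2]) (by linarith [hXY.2.2])
      simp only [norm_mul, norm_indicator_eq_indicator_norm]
      rw [MeasureTheory.integral_const_mul, MeasureTheory.integral_indicator (measurableSet_gSet _)]
      simp only [← norm_mul]
      rw [gSet_integral_norm lam hp, hK]
      have := congrArg norm (rect_factor (lam := lam) A A' ν X Y)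
      simp only [norm_mul, norm_indicator_eq_indicator_norm] at this ⊢
      rw [← this]
      ring
    · rcases not_and_or.1 hXY with h | h <;> simp [indicator_of_notMem h]

theorem integral_rect : ∫ p, rectSet.indicator (rectIntegrand lam ν A A') p =
    2 ^ (-lam) * (1 / 2) * (Gamma (1 / 2 - lam) * Gamma lam / Gamma (1 / 2)) *
      ((Gamma A * Gamma (ν + lam) / Gamma (A + (ν + lam))) *
        (Gamma A' * Gamma (lam - ν) / Gamma (A' + (lam - ν)))) := by
  have h0 : 0 < lam.re := by simp only [add_re, sub_re] at *; linarith
  have hi := integrable_rect hA hA' h1 h2 h3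
  rw [← beta_integral hA h1, ← beta_integral hA' h2,
    ← MeasureTheory.integral_indicator measurableSet_Ioo,
    ← MeasureTheory.integral_indicator measurableSet_Ioo, ← integral_prod_mul,
    ← MeasureTheory.integral_const_mul]
  rw [Measure.volume_eq_prod] at hi ⊢
  rw [integral_prod_symm _ hi]
  refine integral_congr_ae (Eventually.of_forall ?_)
  rintro ⟨X, Y⟩
  simp only [indicator_rectSet]
  by_cases hXY : X ∈ Ioo (0:ℝ) 1 ∧ Y ∈ Ioo (0:ℝ) 1
  · have hp : 0 < (1 - X) * (1 - Y) := mul_pos (by linarith [hXY.1.2]) (by linarith [hXY.2.2])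
    rw [MeasureTheory.integral_const_mul, MeasureTheory.integral_indicator (measurableSet_gSet _),
      gSet_integral h0 h3 hp, ← rect_factor]
    ring
  · rcases not_and_or.1 hXY with h | h <;> simp [indicator_of_notMem h]

variable (hAA : A + A' = 1 - lam)
include hAA

theorem integrable_triple : IntegrableOn (tripleIntegrand lam ν A A') mehlerSet₃ := by
  have := isAddHaarMeasure_volume₃
  rw [← rectMap_image, integrableOn_image_iff_integrableOn_abs_det_fderiv_smul volume
    measurableSet_rectSet (fun p hp => (rectMap_hasFDerivAt hp.2.2.1.ne').hasFDerivWithinAt)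
    rectMap_injOn]
  exact IntegrableOn.congr_fun ((integrable_indicator_iff measurableSet_rectSet).1
    (integrable_rect hA hA' h1 h2 h3)) (fun p hp => (rectIntegrand_eq hAA hp).symm)
    measurableSet_rectSet

theorem integral_triple : ∫ p in mehlerSet₃, tripleIntegrand lam ν A A' p =
    2 ^ (-lam) * (1 / 2) * (Gamma (1 / 2 - lam) * Gamma lam / Gamma (1 / 2)) *
      ((Gamma A * Gamma (ν + lam) / Gamma (A + (ν + lam))) *
        (Gamma A' * Gamma (lam - ν) / Gamma (A' + (lam - ν)))) := by
  have := isAddHaarMeasure_volume₃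
  rw [← integral_rect hA hA' h1 h2 h3, MeasureTheory.integral_indicator measurableSet_rectSet,
    ← rectMap_image, integral_image_eq_integral_abs_det_fderiv_smul volume
    measurableSet_rectSet (fun p hp => (rectMap_hasFDerivAt hp.2.2.1.ne').hasFDerivWithinAt)
    rectMap_injOn]
  exact setIntegral_congr_fun measurableSet_rectSet fun p hp => rectIntegrand_eq hAA hp

/-- The product integral with Mehler integrals in place of the Legendre functions; Fubini's theorem
identifies it with the triple integral. -/
theorem integral_mehler_product :
    ∫ t in Ioi (1:ℝ), ((t - 1 : ℝ) : ℂ) ^ (lam - 1) *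
      ((∫ x in mehlerSet t, mehlerIntegrand A ν t x) *
        ∫ y in mehlerSet t, mehlerIntegrand A' (-ν) t y) =
    2 ^ (-lam) * (1 / 2) * (Gamma (1 / 2 - lam) * Gamma lam / Gamma (1 / 2)) *
      ((Gamma A * Gamma (ν + lam) / Gamma (A + (ν + lam))) *
        (Gamma A' * Gamma (lam - ν) / Gamma (A' + (lam - ν)))) := by
  have hi := (integrable_indicator_iff measurableSet_mehlerSet₃).2
    (integrable_triple hA hA' h1 h2 h3 hAA)
  rw [← integral_triple hA hA' h1 h2 h3 hAA,
    ← MeasureTheory.integral_indicator measurableSet_mehlerSet₃]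
  rw [Measure.volume_eq_prod] at hi ⊢
  rw [integral_prod _ hi, ← MeasureTheory.integral_indicator measurableSet_Ioi]
  refine integral_congr_ae (Eventually.of_forall fun t => ?_)
  simp only
  by_cases ht : t ∈ Ioi (1:ℝ)
  · rw [indicator_of_mem ht, ← MeasureTheory.integral_indicator (measurableSet_mehlerSet t),
      ← MeasureTheory.integral_indicator (measurableSet_mehlerSet t), ← integral_prod_mul,
      ← MeasureTheory.integral_const_mul]
    refine integral_congr_ae (Eventually.of_forall ?_)
    rintro ⟨x, y⟩
    simp only
    by_cases hx : x ∈ mehlerSet t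
    · by_cases hy : y ∈ mehlerSet t
      · have : (t, x, y) ∈ mehlerSet₃ := ⟨ht, hx, hy⟩
        rw [indicator_of_mem this, indicator_of_mem hx, indicator_of_mem hy]
        rfl
      · have : (t, x, y) ∉ mehlerSet₃ := fun h => hy h.2.2
        rw [indicator_of_notMem this, indicator_of_notMem hy]; simp
    · have : (t, x, y) ∉ mehlerSet₃ := fun h => hx h.2.1
      rw [indicator_of_notMem this, indicator_of_notMem hx]; simp
  · rw [indicator_of_notMem ht]
    refine (integral_eq_zero_of_ae (Eventually.of_forall fun q => ?_)).symm
    exact indicator_of_notMem (fun h => ht h.1) _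

end

/-! ### The product integral on the base strip -/

/-- The Legendre function `Q_μ^{-ν}(t)` stripped of its factors independent of `t`, with the
regularized hypergeometric function `F / Γ(μ + 3/2)`. -/
noncomputable def normQ (ν μ : ℂ) (t : ℝ) : ℂ :=
  (t : ℂ) ^ (-μ + ν - 1) * ((t ^ 2 - 1 : ℝ) : ℂ) ^ (-ν / 2) *
    (hyp2F1 ((μ - ν + 2) / 2) ((μ - ν + 1) / 2) (μ + 3 / 2) (1 / (t : ℂ) ^ 2) / Gamma (μ + 3 / 2))

theorem legendreQ_eq_normQ (ν μ : ℂ) (t : ℝ) : legendreQ (-ν) μ t =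
    exp (-(ν * Real.pi * I)) * (Real.sqrt Real.pi : ℂ) * 2 ^ (-μ - 1) * Gamma (μ + 1 - ν) *
      normQ ν μ t := by
  rw [legendreQ, normQ]
  push_cast
  rw [show -ν * Real.pi * I = -(ν * Real.pi * I) by ring, show μ + -ν + 1 = μ + 1 - ν by ring,
    show -μ - -ν - 1 = -μ + ν - 1 by ring, show μ + -ν + 2 = μ - ν + 2 by ring,
    show μ + 1 - ν = μ - ν + 1 by ring]
  ring

theorem hyp2F1_comm (a b c z : ℂ) : hyp2F1 a b c z = hyp2F1 b a c z := by
  unfold hyp2F1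
  refine tsum_congr fun n => ?_
  rw [mul_comm (Polynomial.eval a _)]

theorem two_mul_cpow_neg {t : ℝ} (ht : 0 < t) (A : ℂ) :
    (2 * t : ℂ) ^ (-A) = (2 ^ A)⁻¹ * (t : ℂ) ^ (-A) := by
  have := mul_cpow_ofReal_nonneg (a := 2) (b := t) (by norm_num) ht.le (-A)
  push_cast at this
  rw [this, cpow_neg]

theorem normQ_eq_mehler {ν μ : ℂ} (hA : 0 < (μ + 1 - ν).re) (hν : -(1 / 2) < ν.re) {t : ℝ}
    (ht : 1 < t) : normQ ν μ t = ((t ^ 2 - 1 : ℝ) : ℂ) ^ (-ν / 2) *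
      (2 ^ (μ + 1 - ν) / (Gamma (ν + 1 / 2) * Gamma (μ + 1 - ν))) *
        ∫ x in mehlerSet t, mehlerIntegrand (μ + 1 - ν) ν t x := by
  have h := mehler_integral hA hν ht
  have h1 : Gamma (ν + 1 / 2) ≠ 0 := Gamma_ne_zero_of_re_pos (by simp; linarith)
  have h2 : Gamma (μ + 1 - ν) ≠ 0 := Gamma_ne_zero_of_re_pos hA
  have h3 : (2 : ℂ) ^ (μ + 1 - ν) ≠ 0 := by simp [cpow_eq_zero_iff]
  simp only [mehlerIntegrand]
  rw [h, normQ, hyp2F1_comm, two_mul_cpow_neg (by linarith)]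
  rw [show (μ + 1 - ν + 1) / 2 = (μ - ν + 2) / 2 by ring, show (μ + 1 - ν) / 2 = (μ - ν + 1) / 2 by ring,
    show μ + 1 - ν + ν + 1 / 2 = μ + 3 / 2 by ring, show -(μ + 1 - ν) = -μ + ν - 1 by ring]
  generalize (2 : ℂ) ^ (μ + 1 - ν) = x1 at *
  generalize (t : ℂ) ^ (-μ + ν - 1) = x2 at *
  generalize Gamma (ν + 1 / 2) = x3 at *
  generalize Gamma (μ + 1 - ν) = x4 at *
  generalize Gamma (μ + 3 / 2) = x5 at *
  generalize hyp2F1 _ _ _ _ = x6 at *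
  generalize ((t ^ 2 - 1 : ℝ) : ℂ) ^ (-ν / 2) = x7 at *
  by_cases h5 : x5 = 0
  · simp [h5]
  · field_simp

/-- Mehler's integral with `-ν` in place of `ν`: up to a power of `t² - 1`, Euler's transformation of
`₂F₁` replaces `ν` by `-ν`. -/
theorem normQ_eq_mehler' {ν μ : ℂ} (hA : 0 < (μ + 1 + ν).re) (hA2 : 0 < (μ - ν + 2).re)
    (hν : ν.re < 1 / 2) {t : ℝ}
    (ht : 1 < t) : normQ ν μ t = ((t ^ 2 - 1 : ℝ) : ℂ) ^ (ν / 2) *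
      (2 ^ (μ + 1 + ν) / (Gamma (1 / 2 - ν) * Gamma (μ + 1 + ν))) *
        ∫ x in mehlerSet t, mehlerIntegrand (μ + 1 + ν) (-ν) t x := by
  have h := mehler_integral (ν := -ν) hA (by simp; linarith) ht
  have h1 : Gamma (1 / 2 - ν) ≠ 0 := Gamma_ne_zero_of_re_pos (by simp; linarith)
  have h2 : Gamma (μ + 1 + ν) ≠ 0 := Gamma_ne_zero_of_re_pos hA
  have h3 : (2 : ℂ) ^ (μ + 1 + ν) ≠ 0 := by simp [cpow_eq_zero_iff]
  have ht0 : 0 < t := by linarith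
  have htc : (t : ℂ) ≠ 0 := by exact_mod_cast ht0.ne'
  have ht1 : 0 < t ^ 2 - 1 := by nlinarith
  have htc1 : ((t ^ 2 - 1 : ℝ) : ℂ) ≠ 0 := by exact_mod_cast ht1.ne'
  have e := euler_transformation (a := (μ - ν + 2) / 2) (b := (μ - ν + 1) / 2) (c := μ + 3 / 2)
    (z := 1 / t ^ 2)
    (by rw [show (μ - ν + 2) / 2 = ((1 / 2 : ℝ) : ℂ) * (μ - ν + 2) by push_cast; ring, re_ofReal_mul]; positivity)
    (by rw [show μ + 3 / 2 - (μ - ν + 2) / 2 = ((1 / 2 : ℝ) : ℂ) * (μ + 1 + ν) by push_cast; ring, re_ofReal_mul]; positivity)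
    (by positivity) (by rw [div_lt_one (by positivity)]; nlinarith)
  rw [show μ + 3 / 2 - (μ - ν + 2) / 2 - (μ - ν + 1) / 2 = ν by ring,
    show μ + 3 / 2 - (μ - ν + 2) / 2 = (μ + 1 + ν) / 2 by ring,
    show μ + 3 / 2 - (μ - ν + 1) / 2 = (μ + 1 + ν + 1) / 2 by ring] at e
  have e2 : (1 - ((1 / t ^ 2 : ℝ) : ℂ)) ^ ν = ((t ^ 2 - 1 : ℝ) : ℂ) ^ ν * (t : ℂ) ^ (-(2 * ν)) := by
    have : 1 - ((1 / t ^ 2 : ℝ) : ℂ) = ((t ^ 2 - 1 : ℝ) : ℂ) / ((t ^ 2 : ℝ) : ℂ) := by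
      rw [← ofReal_one, ← ofReal_sub, ← ofReal_div]; congr 1; field_simp
    rw [this, div_cpow_ofReal_nonneg ht1.le (by positivity), cpow_neg, div_eq_mul_inv, pow_two t,
      ofReal_mul t t, mul_cpow_ofReal_nonneg ht0.le ht0.le, two_mul, cpow_add _ _ htc]
  rw [e2] at e
  push_cast at e
  simp only [mehlerIntegrand]
  rw [h, normQ, hyp2F1_comm, e, two_mul_cpow_neg (by linarith)]
  rw [hyp2F1_comm ((μ + 1 + ν) / 2), show μ + 1 + ν + -ν + 1 / 2 = μ + 3 / 2 by ring,
    show -ν + 1 / 2 = 1 / 2 - ν by ring]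
  have k1 : (t : ℂ) ^ (-μ + ν - 1) * (t : ℂ) ^ (-(2 * ν)) = (t : ℂ) ^ (-(μ + 1 + ν)) := by
    rw [← cpow_add _ _ htc]; congr 1; ring
  have k2 : ((t ^ 2 - 1 : ℝ) : ℂ) ^ (-ν / 2) * ((t ^ 2 - 1 : ℝ) : ℂ) ^ ν =
      ((t ^ 2 - 1 : ℝ) : ℂ) ^ (ν / 2) := by
    rw [← cpow_add _ _ htc1]; congr 1; ring
  rw [← k1, ← k2]
  push_cast
  generalize (2 : ℂ) ^ (μ + 1 + ν) = x1 at *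
  generalize (t : ℂ) ^ (-μ + ν - 1) = x2 at *
  generalize Gamma (1 / 2 - ν) = x3 at *
  generalize Gamma (μ + 1 + ν) = x4 at *
  generalize Gamma (μ + 3 / 2) = x5 at *
  generalize hyp2F1 _ _ _ _ = x6 at *
  by_cases h5 : x5 = 0
  · simp [h5]
  · generalize (t : ℂ) ^ (-(2 * ν)) = x7 at *
    generalize ((t : ℂ) ^ 2 - 1) ^ (-ν / 2) = x8 at *
    generalize ((t : ℂ) ^ 2 - 1) ^ ν = x9 at *
    field_simp

/-- The part of the product integral that does not depend on the degree. -/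
noncomputable def normConst (lam ν : ℂ) : ℂ :=
  2 ^ (1 - lam) * (2 ^ (-lam) * (1 / 2) * (Gamma (1 / 2 - lam) * Gamma lam / Gamma (1 / 2))) *
    (Gamma (ν + lam) * Gamma (lam - ν)) / (Gamma (ν + 1 / 2) * Gamma (1 / 2 - ν))

/-- The product integral for degrees `ρ` in the strip where both Mehler integrals converge. -/
theorem normQ_product_integral_base {ν lam ρ : ℂ} (hν0 : 0 < ν.re) (hν1 : ν.re < 1 / 2)
    (hl0 : ν.re < lam.re) (hl1 : lam.re < 1 / 2) (hρ0 : ν.re - 1 < ρ.re)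
    (hρ1 : ρ.re < ν.re - lam.re) :
    ∫ t in Ioi (1 : ℝ), ((t - 1 : ℝ) : ℂ) ^ (lam - 1) * (normQ ν ρ t * normQ ν (-1 - lam - ρ) t) =
      normConst lam ν * ((Gamma (ρ + 1 + lam))⁻¹ * (Gamma (-ρ))⁻¹) := by
  have hA : 0 < (ρ + 1 - ν).re := by simp; linarith
  have hA' : 0 < (-1 - lam - ρ + 1 + ν).re := by simp; linarith
  have hA2 : 0 < (-1 - lam - ρ - ν + 2).re := by simp; linarith
  have h := integral_mehler_product hA hA' (ν := ν) (lam := lam) (by simp; linarith)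
    (by simp; linarith) hl1 (by ring)
  have h1 := Gamma_ne_zero_of_re_pos hA
  have h2 := Gamma_ne_zero_of_re_pos hA'
  have h3 : Gamma (ν + 1 / 2) ≠ 0 := Gamma_ne_zero_of_re_pos (by simp; linarith)
  have h4 : Gamma (1 / 2 - ν) ≠ 0 := Gamma_ne_zero_of_re_pos (by simp; linarith)
  have h5 : (2 : ℂ) ^ (ρ + 1 - ν) * 2 ^ (-1 - lam - ρ + 1 + ν) = 2 ^ (1 - lam) := by
    rw [← cpow_add _ _ two_ne_zero]; congr 1; ring
  have e : ∀ t ∈ Ioi (1:ℝ), ((t - 1 : ℝ) : ℂ) ^ (lam - 1) *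
      (normQ ν ρ t * normQ ν (-1 - lam - ρ) t) =
      (2 ^ (1 - lam) / (Gamma (ν + 1 / 2) * Gamma (1 / 2 - ν) * Gamma (ρ + 1 - ν) *
        Gamma (-1 - lam - ρ + 1 + ν))) *
      (((t - 1 : ℝ) : ℂ) ^ (lam - 1) * ((∫ x in mehlerSet t, mehlerIntegrand (ρ + 1 - ν) ν t x) *
        ∫ y in mehlerSet t, mehlerIntegrand (-1 - lam - ρ + 1 + ν) (-ν) t y)) := by
    intro t ht
    have ht : 1 < t := ht
    have ht1 : 0 < t ^ 2 - 1 := by nlinarith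
    have htc1 : ((t ^ 2 - 1 : ℝ) : ℂ) ≠ 0 := by exact_mod_cast ht1.ne'
    have k : ((t ^ 2 - 1 : ℝ) : ℂ) ^ (-ν / 2) * ((t ^ 2 - 1 : ℝ) : ℂ) ^ (ν / 2) = 1 := by
      rw [← cpow_add _ _ htc1]; ring_nf; simp
    rw [normQ_eq_mehler hA (by linarith) ht, normQ_eq_mehler' hA' hA2 hν1 ht, ← h5]
    generalize ((t ^ 2 - 1 : ℝ) : ℂ) ^ (-ν / 2) = x1 at *
    generalize ((t ^ 2 - 1 : ℝ) : ℂ) ^ (ν / 2) = x2 at *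
    generalize (2 : ℂ) ^ (ρ + 1 - ν) = x3 at *
    generalize (2 : ℂ) ^ (-1 - lam - ρ + 1 + ν) = x4 at *
    generalize (((t - 1 : ℝ) : ℂ)) ^ (lam - 1) = x5 at *
    generalize Gamma (ρ + 1 - ν) = x6 at *
    generalize Gamma (-1 - lam - ρ + 1 + ν) = x7 at *
    generalize Gamma (ν + 1 / 2) = x8 at *
    generalize Gamma (1 / 2 - ν) = x9 at *
    generalize ∫ x in mehlerSet t, mehlerIntegrand (ρ + 1 - ν) ν t x = x10 at *
    generalize ∫ x in mehlerSet t, mehlerIntegrand (-1 - lam - ρ + 1 + ν) (-ν) t x = x11 at *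
    field_simp
    linear_combination (x3 * x4 * x5 * x10 * x11) * k
  rw [setIntegral_congr_fun measurableSet_Ioi e, MeasureTheory.integral_const_mul, h, normConst,
    show ρ + 1 - ν + (ν + lam) = ρ + 1 + lam by ring,
    show -1 - lam - ρ + 1 + ν + (lam - ν) = -ρ by ring]
  generalize Gamma (ρ + 1 - ν) = x6 at *
  generalize Gamma (-1 - lam - ρ + 1 + ν) = x7 at *
  generalize Gamma (ρ + 1 + lam) = x8
  generalize Gamma (-ρ) = x9
  generalize Gamma (ν + 1 / 2) = x10 at *
  generalize Gamma (1 / 2 - ν) = x11 at *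
  generalize (2 : ℂ) ^ (1 - lam) = x12
  generalize (2 : ℂ) ^ (-lam) = x13
  simp only [div_eq_mul_inv, mul_inv]
  have := mul_inv_cancel₀ h1
  have h6 := mul_inv_cancel₀ h2
  generalize x6⁻¹ = x6' at *
  generalize x7⁻¹ = x7' at *
  linear_combination (x12 * x10⁻¹ * x11⁻¹ * (x13 * (1 * 2⁻¹) * (Gamma (1 * 2⁻¹ - lam) * Gamma lam * (Gamma (1 * 2⁻¹))⁻¹)) * Gamma (ν + lam) * Gamma (lam - ν) * x8⁻¹ * x9⁻¹) * (this * x7 * x7' + h6)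

/-! ### Holomorphic parameter integrals -/

/-- A parameter integral of holomorphic functions is holomorphic where it is locally dominated. -/
theorem differentiableOn_integral_of_dominated {α : Type*} [MeasurableSpace α] {m : Measure α}
    {U : Set ℂ} (hU : IsOpen U) {F : ℂ → α → ℂ}
    (hm : ∀ z ∈ U, AEStronglyMeasurable (F z) m)
    (hd : ∀ᵐ x ∂m, DifferentiableOn ℂ (fun z => F z x) U)
    (hb : ∀ z₀ ∈ U, ∃ b : α → ℝ, Integrable b m ∧
      ∃ ε > 0, ∀ᵐ x ∂m, ∀ z ∈ Metric.ball z₀ ε, z ∈ U → ‖F z x‖ ≤ b x) :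
    DifferentiableOn ℂ (fun z => ∫ x, F z x ∂m) U := by
  intro z₀ hz₀
  obtain ⟨b, hbi, ε, hε, hb⟩ := hb z₀ hz₀
  obtain ⟨δ, hδ, hδU⟩ := Metric.isOpen_iff.1 hU z₀ hz₀
  obtain ⟨r, hr0, hrε, hrδ⟩ : ∃ r, 0 < r ∧ 2 * r < ε ∧ 2 * r < δ :=
    ⟨min ε δ / 4, by positivity, by have := min_le_left ε δ; have := lt_min hε hδ; linarith,
      by have := min_le_right ε δ; have := lt_min hε hδ; linarith⟩
  have hsub : ∀ z ∈ Metric.ball z₀ r, ∀ w, dist w z ≤ r →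
      w ∈ Metric.ball z₀ ε ∧ w ∈ U := by
    intro z hz w hw
    have h1 : dist w z₀ < 2 * r := by
      have := dist_triangle w z z₀
      rw [Metric.mem_ball] at hz
      linarith
    exact ⟨Metric.mem_ball.2 (by linarith), hδU (Metric.mem_ball.2 (by linarith))⟩
  have hself : ∀ z ∈ Metric.ball z₀ r, z ∈ U := fun z hz => (hsub z hz z (by simp [hr0.le])).2
  have hmem : z₀ ∈ Metric.ball z₀ r := Metric.mem_ball_self hr0
  have hdiff : ∀ᵐ x ∂m, ∀ z ∈ Metric.ball z₀ r,
      HasDerivAt (fun z => F z x) (deriv (fun z => F z x) z) z := by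
    filter_upwards [hd] with x hx z hz
    exact (hx.differentiableAt (hU.mem_nhds (hself z hz))).hasDerivAt
  have h := hasDerivAt_integral_of_dominated_loc_of_deriv_le (μ := m) (F := F) (x₀ := z₀)
    (s := Metric.ball z₀ r) (F' := fun z x => deriv (fun z => F z x) z) (bound := fun x => b x / r)
    (Metric.ball_mem_nhds z₀ hr0)
    (by filter_upwards [hU.mem_nhds hz₀] with z hz using hm z hz)
    (hbi.mono' (hm z₀ hz₀) (by
      filter_upwards [hb] with x hx using hx z₀ (Metric.mem_ball_self hε) hz₀))
    ?_ ?_ (hbi.div_const r) hdiff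
  · exact h.2.differentiableAt.differentiableWithinAt
  · -- the derivative is a limit of difference quotients along a sequence
    have hseq : Tendsto (fun n : ℕ => z₀ + ((r / 2 * (1 / ((n : ℝ) + 1)) : ℝ) : ℂ)) atTop
        (𝓝[≠] z₀) := by
      refine tendsto_nhdsWithin_iff.2 ⟨?_, Eventually.of_forall fun n => ?_⟩
      · have : Tendsto (fun n : ℕ => r / 2 * (1 / ((n : ℝ) + 1))) atTop (𝓝 (r / 2 * 0)) :=
          tendsto_one_div_add_atTop_nhds_zero_nat.const_mul _
        have := (continuous_ofReal.tendsto _).comp this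
        simpa using this.const_add z₀
      · have : (r / 2 * (1 / ((n : ℝ) + 1)) : ℝ) ≠ 0 := by positivity
        have : ((r / 2 * (1 / ((n : ℝ) + 1)) : ℝ) : ℂ) ≠ 0 := by exact_mod_cast this
        simpa using this
    refine aestronglyMeasurable_of_tendsto_ae atTop
      (f := fun (n : ℕ) x => slope (fun z => F z x) z₀
        (z₀ + ((r / 2 * (1 / ((n : ℝ) + 1)) : ℝ) : ℂ))) (fun n => ?_) ?_
    · simp only [slope_def_field]
      refine ((hm _ ?_).sub (hm _ hz₀)).div₀ aestronglyMeasurable_const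
      refine hself _ (Metric.mem_ball.2 ?_)
      rw [dist_eq_norm, add_sub_cancel_left, norm_real, Real.norm_of_nonneg (by positivity)]
      have : 1 / ((n : ℝ) + 1) ≤ 1 := by
        rw [div_le_one (by positivity)]; linarith [n.cast_nonneg (α := ℝ)]
      nlinarith
    · filter_upwards [hdiff] with x hx
      exact (hasDerivAt_iff_tendsto_slope.1 (hx z₀ hmem)).comp hseq
  · filter_upwards [hb, hd] with x hx hdx z hz
    refine norm_deriv_le_of_forall_mem_sphere_norm_le hr0 ?_ ?_
    · refine DifferentiableOn.diffContOnCl fun w hw => ?_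
      rw [closure_ball z hr0.ne'] at hw
      exact (hdx.differentiableAt (hU.mem_nhds (hsub z hz w hw).2)).differentiableWithinAt
    · intro w hw
      have := hsub z hz w (Metric.mem_sphere.1 hw).le
      exact hx w this.1 this.2

/-! ### Contiguous relation and holomorphy in the degree -/

/-- This raises `b` by one while `c - b` does not decrease, so that Euler's integral becomes available
for `-1 < Re b ≤ 0`. -/
theorem hyp2F1_contiguous {a b c : ℂ} {z : ℝ} (hz : 0 ≤ z) (hz1 : z < 1) (hb : 0 < (b + 1).re)
    (hc : 0 < c.re) (hcb : 0 < (c - b).re) :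
    hyp2F1 a b c z = hyp2F1 a (b + 1) (c + 1) z -
      z * (a * (c - b) / (c * (c + 1))) * hyp2F1 (a + 1) (b + 1) (c + 2) z := by
  have hc1 : 0 < (c + 1).re := by simp; linarith
  have hc2 : 0 < (c + 2).re := by simp; linarith
  have s1 := euler_hasSum (a := a) hb (c := c + 1) (by simpa using hcb) hz hz1
  have s2 := euler_hasSum (a := a + 1) hb (c := c + 2) (by simp at *; linarith) hz hz1
  have hn {b' c' : ℂ} (hb' : 0 < b'.re) (hc' : 0 < c'.re) (hcb' : 0 < (c' - b').re) :
      Gamma b' * Gamma (c' - b') / Gamma c' ≠ 0 :=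
    div_ne_zero (mul_ne_zero (Gamma_ne_zero_of_re_pos hb') (Gamma_ne_zero_of_re_pos hcb'))
      (Gamma_ne_zero_of_re_pos hc')
  have t1 := ((summable_mul_right_iff (hn hb hc1 (by simpa using hcb))).1 s1.summable)
  have t2 := ((summable_mul_right_iff (hn hb hc2 (by simp at *; linarith))).1 s2.summable)
  have hcne : c ≠ 0 := fun h => by simp [h] at hc
  have hc1ne : c + 1 ≠ 0 := fun h => by rw [h] at hc1; simp at hc1
  have r2 := (t2.hasSum.mul_left (z * (a * (c - b) / (c * (c + 1)))))
  -- the second series is shifted by one so that both are power series with the same exponents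
  have ex (ψ : ℕ → ℂ) : ∃ φ : ℕ → ℂ, φ 0 = 0 ∧ ∀ n, φ (n + 1) = ψ n :=
    ⟨fun n => match n with
      | 0 => 0
      | n + 1 => ψ n, rfl, fun _ => rfl⟩
  obtain ⟨φ, φ0, φs⟩ := ex fun n => z * (a * (c - b) / (c * (c + 1))) *
      ((ascPochhammer ℂ n).eval (a + 1) * (ascPochhammer ℂ n).eval (b + 1) /
        ((ascPochhammer ℂ n).eval (c + 2) * (n.factorial : ℂ)) * (z : ℂ) ^ n)
  have r3 : HasSum φ (z * (a * (c - b) / (c * (c + 1))) * hyp2F1 (a + 1) (b + 1) (c + 2) z) := by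
    refine (hasSum_nat_add_iff' 1).1 ?_
    simpa only [Finset.range_one, Finset.sum_singleton, φ0, sub_zero, φs, hyp2F1] using r2
  have r := t1.hasSum.sub r3
  refine Eq.trans ?_ r.tsum_eq
  refine tsum_congr fun n => ?_
  rcases n with _ | n
  · simp [φ0]
  · rw [φs]
    have shift (x : ℂ) : (ascPochhammer ℂ (n + 1)).eval x = x * (ascPochhammer ℂ n).eval (x + 1) := by
      rw [ascPochhammer_succ_left]; simp [Polynomial.eval_comp]
    have last (x : ℂ) : (ascPochhammer ℂ (n + 1)).eval x = (ascPochhammer ℂ n).eval x * (x + n) := by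
      rw [ascPochhammer_succ_right]; simp
    have hne {x : ℂ} (hx : 0 < x.re) (k : ℕ) : (ascPochhammer ℂ k).eval x ≠ 0 := fun h => by
      have h1 := Gamma_add_nat hx k
      rw [h, zero_mul] at h1
      exact Gamma_ne_zero_of_re_pos (by rw [add_re, natCast_re]; positivity) h1
    have e1 : (ascPochhammer ℂ n).eval (c + 2) =
        (ascPochhammer ℂ n).eval (c + 1) * (c + 1 + n) / (c + 1) := by
      rw [← last, ascPochhammer_succ_left]
      simp only [Polynomial.eval_mul, Polynomial.eval_X, Polynomial.eval_comp, Polynomial.eval_add,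
        Polynomial.eval_one]
      rw [mul_div_cancel_left₀ _ hc1ne]; congr 1; ring
    have hP := hne hc1 n
    have hcn : c + 1 + n ≠ 0 := fun h => by
      have : 0 < (c + 1 + n).re := by rw [add_re, natCast_re]; positivity
      rw [h] at this; simp at this
    rw [e1, shift a, shift b, shift c, last (b + 1), last (c + 1), Nat.factorial_succ]
    have hf : (n.factorial : ℂ) ≠ 0 := by exact_mod_cast n.factorial_ne_zero
    have hn1 : (n : ℂ) + 1 ≠ 0 := by exact_mod_cast n.succ_ne_zero
    push_cast
    generalize (ascPochhammer ℂ n).eval (c + 1) = p1 at *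
    generalize (ascPochhammer ℂ n).eval (b + 1) = p2 at *
    generalize (ascPochhammer ℂ n).eval (a + 1) = p3 at *
    field_simp
    ring

/-- Euler's integral (`j = 0, 1`) entering the regularized hypergeometric function of `normQ`
through the contiguous relation `hyp2F1_contiguous`. -/
noncomputable def eulerInt (ν : ℂ) (j : ℕ) (z : ℝ) (μ : ℂ) : ℂ :=
  ∫ u : ℝ in Ioo 0 1, (u : ℂ) ^ ((μ - ν + 1) / 2) * ((1 - u : ℝ) : ℂ) ^ ((μ + ν) / 2 + j) *
    ((1 - u * z : ℝ) : ℂ) ^ (-((μ - ν + 2) / 2) - j)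

section
variable {ν μ : ℂ} (hν0 : 0 < ν.re) (hν1 : ν.re < 1 / 2)

theorem half_re (x : ℂ) : (x / 2).re = x.re / 2 := by
  rw [show x / 2 = ((1 / 2 : ℝ) : ℂ) * x by push_cast; ring, re_ofReal_mul]; ring

include hν0 hν1

/-- On the half-plane `-3/2 < Re μ` this expresses the regularized `₂F₁` of `normQ` through
convergent Euler integrals and entire functions of `μ`. -/
theorem hyp2F1_div_Gamma_eq (hμ : -(3 / 2) < μ.re) {z : ℝ} (hz : 0 ≤ z) (hz1 : z < 1) :
    hyp2F1 ((μ - ν + 2) / 2) ((μ - ν + 1) / 2) (μ + 3 / 2) z / Gamma (μ + 3 / 2) =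
      ((μ + 3 / 2) * eulerInt ν 0 z μ - (μ - ν + 2) / 2 * z * eulerInt ν 1 z μ) *
        ((Gamma ((μ - ν + 1) / 2 + 1))⁻¹ * (Gamma ((μ + ν) / 2 + 1))⁻¹) := by
  have hb : 0 < ((μ - ν + 1) / 2 + 1).re := by rw [add_re, half_re]; simp; linarith
  have hc : 0 < (μ + 3 / 2).re := by rw [add_re, half_re]; simp; linarith
  have hcb : 0 < (μ + 3 / 2 - (μ - ν + 1) / 2).re := by
    rw [show μ + 3 / 2 - (μ - ν + 1) / 2 = (μ + ν) / 2 + 1 by ring, add_re, half_re]; simp; linarith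
  have e1 := euler_integral (a := (μ - ν + 2) / 2) hb (c := μ + 3 / 2 + 1)
    (by rw [add_sub_add_right_eq_sub]; exact hcb) hz hz1
  have e2 := euler_integral (a := (μ - ν + 2) / 2 + 1) hb (c := μ + 3 / 2 + 2)
    (by rw [show μ + 3 / 2 + 2 - ((μ - ν + 1) / 2 + 1) = (μ + 3 / 2 - (μ - ν + 1) / 2) + 1 by ring,
      add_re]; simp only [one_re]; linarith) hz hz1
  have f1 : eulerInt ν 0 z μ =
      hyp2F1 ((μ - ν + 2) / 2) ((μ - ν + 1) / 2 + 1) (μ + 3 / 2 + 1) z *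
        (Gamma ((μ - ν + 1) / 2 + 1) * Gamma (μ + 3 / 2 + 1 - ((μ - ν + 1) / 2 + 1)) /
          Gamma (μ + 3 / 2 + 1)) := by
    refine Eq.trans ?_ e1
    unfold eulerInt
    refine integral_congr_ae (ae_of_all _ fun u => ?_)
    push_cast
    ring_nf
  have f2 : eulerInt ν 1 z μ =
      hyp2F1 ((μ - ν + 2) / 2 + 1) ((μ - ν + 1) / 2 + 1) (μ + 3 / 2 + 2) z *
        (Gamma ((μ - ν + 1) / 2 + 1) * Gamma (μ + 3 / 2 + 2 - ((μ - ν + 1) / 2 + 1)) /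
          Gamma (μ + 3 / 2 + 2)) := by
    refine Eq.trans ?_ e2
    unfold eulerInt
    refine integral_congr_ae (ae_of_all _ fun u => ?_)
    push_cast
    ring_nf
  rw [hyp2F1_contiguous hz hz1 hb hc hcb, f1, f2]
  have hcne : μ + 3 / 2 ≠ 0 := fun h => by rw [h] at hc; simp at hc
  have hc1 : μ + 3 / 2 + 1 ≠ 0 := fun h => by
    have : (μ + 3 / 2 + 1).re = (μ + 3 / 2).re + 1 := by simp
    rw [h] at this; simp only [zero_re] at this; linarith
  have hcbne : μ + 3 / 2 - (μ - ν + 1) / 2 ≠ 0 := fun h => by rw [h] at hcb; simp at hcb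
  have g1 := Gamma_add_one _ hcne
  have g2 : Gamma (μ + 3 / 2 + 2) = (μ + 3 / 2 + 1) * Gamma (μ + 3 / 2 + 1) := by
    rw [← Gamma_add_one _ hc1]; congr 1; ring
  have g3 : Gamma (μ + 3 / 2 + 2 - ((μ - ν + 1) / 2 + 1)) = (μ + 3 / 2 - (μ - ν + 1) / 2) *
      Gamma (μ + 3 / 2 - (μ - ν + 1) / 2) := by
    rw [← Gamma_add_one _ hcbne]; congr 1; ring
  rw [g2, g3, g1, add_sub_add_right_eq_sub,
    show (μ + ν) / 2 + 1 = μ + 3 / 2 - (μ - ν + 1) / 2 by ring]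
  have n1 := Gamma_ne_zero_of_re_pos hc
  have n2 := Gamma_ne_zero_of_re_pos hcb
  have n3 := Gamma_ne_zero_of_re_pos hb
  generalize hyp2F1 _ _ (μ + 3 / 2 + 1) _ = h1 at *
  generalize hyp2F1 _ _ (μ + 3 / 2 + 2) _ = h2 at *
  generalize Gamma (μ + 3 / 2) = G1 at *
  generalize Gamma (μ + 3 / 2 - (μ - ν + 1) / 2) = G2 at *
  generalize Gamma ((μ - ν + 1) / 2 + 1) = G3 at *
  generalize μ + 3 / 2 - (μ - ν + 1) / 2 = d at *
  generalize μ + 3 / 2 = c at *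
  generalize (μ - ν + 2) / 2 = a at *
  clear * - hcne hc1 hcbne n1 n2 n3
  field_simp

/-- A majorant that does not depend on `μ`, `z` and `j`: the exponent of `u` exceeds `-1/2`, and
`1 - u ≤ 1 - u z` reduces the last two factors to `(1 - u) ^ (Re ν - 1)`. -/
theorem eulerInt_integrand_norm_le (hμ : -(3 / 2) < μ.re) {z : ℝ} (hz1 : z < 1) (j : ℕ)
    {u : ℝ} (hu : u ∈ Ioo (0:ℝ) 1) :
    ‖(u : ℂ) ^ ((μ - ν + 1) / 2) * ((1 - u : ℝ) : ℂ) ^ ((μ + ν) / 2 + j) *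
      ((1 - u * z : ℝ) : ℂ) ^ (-((μ - ν + 2) / 2) - j)‖ ≤
    u ^ ((1 / 2 : ℝ) - 1) * (1 - u) ^ (ν.re - 1) := by
  obtain ⟨hu0, hu1⟩ := hu
  have h1 : 0 < 1 - u := by linarith
  have h2 : 1 - u ≤ 1 - u * z := by nlinarith
  have h3 : 0 < 1 - u * z := by linarith
  rw [norm_mul, norm_mul, norm_cpow_eq_rpow_re_of_pos hu0, norm_cpow_eq_rpow_re_of_pos h1,
    norm_cpow_eq_rpow_re_of_pos h3, mul_assoc]
  have e1 : ((μ - ν + 1) / 2).re = (μ.re - ν.re + 1) / 2 := by rw [half_re]; simp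
  have e2 : ((μ + ν) / 2 + j).re = (μ.re + ν.re) / 2 + j := by rw [add_re, half_re]; simp
  have e3 : (-((μ - ν + 2) / 2) - j).re = -((μ.re - ν.re + 2) / 2 + j) := by
    rw [sub_re, neg_re, half_re]; simp; ring
  rw [e1, e2, e3]
  have hj : (0 : ℝ) ≤ j := j.cast_nonneg
  refine mul_le_mul (Real.rpow_le_rpow_of_exponent_ge hu0 hu1.le (by linarith)) ?_ (by positivity)
    (by positivity)
  calc (1 - u) ^ ((μ.re + ν.re) / 2 + j) * (1 - u * z) ^ (-((μ.re - ν.re + 2) / 2 + j))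
      ≤ (1 - u) ^ ((μ.re + ν.re) / 2 + j) * (1 - u) ^ (-((μ.re - ν.re + 2) / 2 + j)) := by
        refine mul_le_mul_of_nonneg_left ?_ (by positivity)
        exact Real.rpow_le_rpow_of_nonpos h1 h2 (by linarith)
    _ = (1 - u) ^ (ν.re - 1) := by rw [← Real.rpow_add h1]; congr 1; ring

theorem eulerInt_norm_le (hμ : -(3 / 2) < μ.re) {z : ℝ} (hz1 : z < 1) (j : ℕ) :
    ‖eulerInt ν j z μ‖ ≤ ∫ u : ℝ in Ioo 0 1, u ^ ((1 / 2 : ℝ) - 1) * (1 - u) ^ (ν.re - 1) := by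
  refine norm_integral_le_of_norm_le (beta_integrable_real (by norm_num) hν0) ?_
  filter_upwards [ae_restrict_mem measurableSet_Ioo] with u hu
  exact eulerInt_integrand_norm_le hν0 hν1 hμ hz1 j hu

theorem eulerInt_differentiableOn {z : ℝ} (hz : 0 ≤ z) (hz1 : z < 1) (j : ℕ) :
    DifferentiableOn ℂ (eulerInt ν j z) {μ | -(3 / 2) < μ.re} := by
  refine differentiableOn_integral_of_dominated (isOpen_lt continuous_const continuous_re)
    (fun μ _ => ?_) ?_ (fun μ₀ _ => ⟨_, beta_integrable_real (u := 1 / 2) (by norm_num) hν0,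
      1, one_pos, ?_⟩)
  · exact Measurable.aestronglyMeasurable (by fun_prop)
  · filter_upwards [ae_restrict_mem measurableSet_Ioo] with u hu
    have h1 : (u : ℂ) ≠ 0 := by exact_mod_cast hu.1.ne'
    have h2 : ((1 - u : ℝ) : ℂ) ≠ 0 := by exact_mod_cast (by linarith [hu.2] : 0 < 1 - u).ne'
    have h3 : ((1 - u * z : ℝ) : ℂ) ≠ 0 := by
      exact_mod_cast (by nlinarith [hu.1, hu.2] : 0 < 1 - u * z).ne'
    refine Differentiable.differentiableOn ?_
    refine ((Differentiable.const_cpow (by fun_prop) (Or.inl h1)).mul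
      (Differentiable.const_cpow (by fun_prop) (Or.inl h2))).mul
      (Differentiable.const_cpow (by fun_prop) (Or.inl h3))
  · filter_upwards [ae_restrict_mem measurableSet_Ioo] with u hu μ _ hμ
    exact eulerInt_integrand_norm_le hν0 hν1 hμ hz1 j hu

end

/-! ### Estimates for the normalised Legendre function -/

/-- The substitution `t = 1 / v` gives a beta integrand. -/
theorem weight_integrable {l n : ℝ} (hl : n < l) (hl1 : l < 1 / 2) :
    IntegrableOn (fun t : ℝ => (t - 1) ^ (l - n - 1) * t ^ (l + n - 1)) (Ioi 1) := by
  have him : (fun v : ℝ => v⁻¹) '' Ioo 0 1 = Ioi 1 := by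
    rw [Set.image_inv_eq_inv, Set.inv_Ioo_0_left one_pos, inv_one]
  rw [← him, integrableOn_image_iff_integrableOn_abs_deriv_smul measurableSet_Ioo
    (fun x hx => (hasDerivAt_inv hx.1.ne').hasDerivWithinAt) (inv_injective.injOn)]
  refine (beta_integrable_real (u := 1 - 2 * l) (v := l - n) (by linarith)
    (by linarith)).congr_fun (fun v hv => ?_) measurableSet_Ioo
  obtain ⟨h0, h1⟩ := hv
  have h2 : v⁻¹ - 1 = (1 - v) * v⁻¹ := by field_simp
  have h3 : |-(v ^ 2)⁻¹| = v ^ (-2 : ℝ) := by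
    rw [abs_neg, abs_of_pos (by positivity), Real.rpow_neg h0.le]; norm_cast
  simp only [smul_eq_mul]
  rw [h3, h2, Real.mul_rpow (by linarith) (by positivity), Real.inv_rpow h0.le,
    Real.inv_rpow h0.le, ← Real.rpow_neg h0.le, ← Real.rpow_neg h0.le]
  rw [show 1 - 2 * l - 1 = -2 + (-(l - n - 1)) + (-(l + n - 1)) by ring, Real.rpow_add h0,
    Real.rpow_add h0]
  ring

section
variable {ν μ : ℂ} (hν0 : 0 < ν.re) (hν1 : ν.re < 1 / 2)

include hν0 hν1

theorem normQ_eq_eulerInt (hμ : -(3 / 2) < μ.re) {t : ℝ} (ht : 1 < t) :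
    normQ ν μ t = (t : ℂ) ^ (-μ + ν - 1) * ((t ^ 2 - 1 : ℝ) : ℂ) ^ (-ν / 2) *
      (((μ + 3 / 2) * eulerInt ν 0 (1 / t ^ 2) μ -
        (μ - ν + 2) / 2 * ((1 / t ^ 2 : ℝ) : ℂ) * eulerInt ν 1 (1 / t ^ 2) μ) *
        ((Gamma ((μ - ν + 1) / 2 + 1))⁻¹ * (Gamma ((μ + ν) / 2 + 1))⁻¹)) := by
  have hz1 : 1 / t ^ 2 < 1 := by rw [div_lt_one (by positivity)]; nlinarith
  rw [← hyp2F1_div_Gamma_eq hν0 hν1 hμ (z := 1 / t ^ 2) (by positivity) hz1, normQ]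
  push_cast
  rfl

theorem normQ_differentiableOn {t : ℝ} (ht : 1 < t) :
    DifferentiableOn ℂ (fun μ => normQ ν μ t) {μ | -(3 / 2) < μ.re} := by
  have hz1 : 1 / t ^ 2 < 1 := by rw [div_lt_one (by positivity)]; nlinarith
  have ht0 : (t : ℂ) ≠ 0 := by exact_mod_cast (by linarith : t ≠ 0)
  have hz0 : 0 ≤ 1 / t ^ 2 := by positivity
  have d0 := eulerInt_differentiableOn hν0 hν1 hz0 hz1 0
  have d1 := eulerInt_differentiableOn hν0 hν1 hz0 hz1 1
  have g1 : Differentiable ℂ fun μ : ℂ => (Gamma ((μ - ν + 1) / 2 + 1))⁻¹ :=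
    differentiable_one_div_Gamma.comp (f := fun μ : ℂ => (μ - ν + 1) / 2 + 1) (by fun_prop)
  have g2 : Differentiable ℂ fun μ : ℂ => (Gamma ((μ + ν) / 2 + 1))⁻¹ :=
    differentiable_one_div_Gamma.comp (f := fun μ : ℂ => (μ + ν) / 2 + 1) (by fun_prop)
  have p1 : Differentiable ℂ fun μ : ℂ => (t : ℂ) ^ (-μ + ν - 1) :=
    Differentiable.const_cpow (by fun_prop) (Or.inl ht0)
  refine DifferentiableOn.congr ?_ fun μ hμ => normQ_eq_eulerInt hν0 hν1 hμ ht
  refine (p1.mul_const _).differentiableOn.mul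
    (DifferentiableOn.mul ?_ (g1.mul g2).differentiableOn)
  refine DifferentiableOn.sub (DifferentiableOn.mul (by fun_prop) d0)
    (DifferentiableOn.mul (by fun_prop) d1)

/-- The constant in the estimate of `normQ`; it depends continuously on the degree. -/
noncomputable def normQBound (ν μ : ℂ) : ℝ :=
  (‖μ + 3 / 2‖ + ‖(μ - ν + 2) / 2‖) *
    (∫ u : ℝ in Ioo 0 1, u ^ ((1 / 2 : ℝ) - 1) * (1 - u) ^ (ν.re - 1)) *
    ‖(Gamma ((μ - ν + 1) / 2 + 1))⁻¹ * (Gamma ((μ + ν) / 2 + 1))⁻¹‖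

omit hν0 hν1 in
theorem normQBound_continuous (ν : ℂ) : Continuous (normQBound ν) := by
  have g1 : Continuous fun μ : ℂ => (Gamma ((μ - ν + 1) / 2 + 1))⁻¹ :=
    differentiable_one_div_Gamma.continuous.comp (f := fun μ : ℂ => (μ - ν + 1) / 2 + 1)
      (by fun_prop)
  have g2 : Continuous fun μ : ℂ => (Gamma ((μ + ν) / 2 + 1))⁻¹ :=
    differentiable_one_div_Gamma.continuous.comp (f := fun μ : ℂ => (μ + ν) / 2 + 1)
      (by fun_prop)
  have g3 := (g1.mul g2).norm
  exact (Continuous.mul (by fun_prop) continuous_const).mul g3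

theorem normQ_norm_le (hμ : -(3 / 2) < μ.re) {t : ℝ} (ht : 1 < t) :
    ‖normQ ν μ t‖ ≤
      t ^ (-μ.re + ν.re - 1) * (t ^ 2 - 1) ^ (-ν.re / 2) * normQBound ν μ := by
  have hz1 : 1 / t ^ 2 < 1 := by rw [div_lt_one (by positivity)]; nlinarith
  have ht0 : 0 < t := by linarith
  have ht2 : 0 < t ^ 2 - 1 := by nlinarith
  have n0 := eulerInt_norm_le hν0 hν1 hμ hz1 0
  have n1 := eulerInt_norm_le hν0 hν1 hμ hz1 1
  rw [normQ_eq_eulerInt hν0 hν1 hμ ht, norm_mul, norm_mul, norm_cpow_eq_rpow_re_of_pos ht0,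
    norm_cpow_eq_rpow_re_of_pos ht2, normQBound, norm_mul (_ - _)]
  have e1 : (-μ + ν - 1).re = -μ.re + ν.re - 1 := by simp
  have e2 : (-ν / 2).re = -ν.re / 2 := by rw [half_re]; simp
  rw [e1, e2]
  refine mul_le_mul_of_nonneg_left (mul_le_mul_of_nonneg_right ?_ (norm_nonneg _)) (by positivity)
  refine (norm_sub_le _ _).trans ?_
  rw [norm_mul, norm_mul, norm_mul, add_mul]
  refine add_le_add (mul_le_mul_of_nonneg_left n0 (norm_nonneg _)) ?_
  refine mul_le_mul ?_ n1 (norm_nonneg _) (norm_nonneg _)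
  refine mul_le_of_le_one_right (norm_nonneg _) ?_
  rw [norm_real, Real.norm_of_nonneg (by positivity)]
  exact hz1.le

theorem normQ_aestronglyMeasurable (hμ : -(3 / 2) < μ.re) :
    AEStronglyMeasurable (fun t : ℝ => normQ ν μ t) (volume.restrict (Ioi 1)) := by
  have m (j : ℕ) : StronglyMeasurable fun t : ℝ => eulerInt ν j (1 / t ^ 2) μ :=
    StronglyMeasurable.integral_prod_right (f := fun (t u : ℝ) =>
      (u : ℂ) ^ ((μ - ν + 1) / 2) * ((1 - u : ℝ) : ℂ) ^ ((μ + ν) / 2 + j) *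
      ((1 - u * (1 / t ^ 2) : ℝ) : ℂ) ^ (-((μ - ν + 2) / 2) - j))
      (Measurable.stronglyMeasurable (by unfold Function.uncurry; fun_prop))
  have m0 := (m 0).measurable
  have m1 := (m 1).measurable
  refine AEStronglyMeasurable.congr (f := fun t : ℝ =>
    (t : ℂ) ^ (-μ + ν - 1) * ((t ^ 2 - 1 : ℝ) : ℂ) ^ (-ν / 2) *
      (((μ + 3 / 2) * eulerInt ν 0 (1 / t ^ 2) μ -
        (μ - ν + 2) / 2 * ((1 / t ^ 2 : ℝ) : ℂ) * eulerInt ν 1 (1 / t ^ 2) μ) *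
        ((Gamma ((μ - ν + 1) / 2 + 1))⁻¹ * (Gamma ((μ + ν) / 2 + 1))⁻¹)))
    (Measurable.aestronglyMeasurable (by fun_prop)) ?_
  filter_upwards [ae_restrict_mem measurableSet_Ioi] with t ht
  exact (normQ_eq_eulerInt hν0 hν1 hμ ht).symm

end

/-! ### Analytic continuation in the degree -/

section
variable {ν lam : ℂ} (hν0 : 0 < ν.re) (hν1 : ν.re < 1 / 2) (hl0 : ν.re < lam.re)
  (hl1 : lam.re < 1 / 2)

include hν0 hν1

/-- The degrees add up to `-1 - lam`, so `ρ` enters this majorant only through a constant. -/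
theorem product_integrand_norm_le {ρ : ℂ} (hρ0 : -(3 / 2) < ρ.re) (hρ1 : ρ.re < 1 / 2 - lam.re)
    {t : ℝ} (ht : 1 < t) :
    ‖((t - 1 : ℝ) : ℂ) ^ (lam - 1) * (normQ ν ρ t * normQ ν (-1 - lam - ρ) t)‖ ≤
      (t - 1) ^ (lam.re - ν.re - 1) * t ^ (lam.re + ν.re - 1) *
        (normQBound ν ρ * normQBound ν (-1 - lam - ρ)) := by
  have h1 : 0 < t - 1 := by linarith
  have h2 : 0 < t ^ 2 - 1 := by nlinarith
  have h3 : 0 < t := by linarith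
  have hσ : (-1 - lam - ρ).re = -1 - lam.re - ρ.re := by simp
  have b1 := normQ_norm_le hν0 hν1 hρ0 ht
  have b2 := normQ_norm_le hν0 hν1 (μ := -1 - lam - ρ) (by rw [hσ]; linarith) ht
  have B (μ : ℂ) : 0 ≤ normQBound ν μ := by
    unfold normQBound
    refine mul_nonneg (mul_nonneg (by positivity) ?_) (norm_nonneg _)
    refine setIntegral_nonneg measurableSet_Ioo fun u hu => ?_
    have := hu.1
    have : 0 < 1 - u := by linarith [hu.2]
    positivity
  have B1 := B ρ
  have B2 := B (-1 - lam - ρ)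
  rw [norm_mul, norm_mul, norm_cpow_eq_rpow_re_of_pos h1]
  have e0 : (lam - 1).re = lam.re - 1 := by simp
  rw [e0]
  refine (mul_le_mul_of_nonneg_left (mul_le_mul b1 b2 (norm_nonneg _) (by positivity))
    (by positivity)).trans ?_
  rw [hσ]
  have p1 : t ^ (-ρ.re + ν.re - 1) * t ^ (-(-1 - lam.re - ρ.re) + ν.re - 1) =
      t ^ (lam.re + ν.re - 1) * t ^ ν.re := by
    rw [← Real.rpow_add h3, ← Real.rpow_add h3]; congr 1; ring
  have p2 : (t ^ 2 - 1) ^ (-ν.re / 2) * (t ^ 2 - 1) ^ (-ν.re / 2) ≤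
      (t - 1) ^ (-ν.re) * t ^ (-ν.re) := by
    rw [← Real.rpow_add h2, ← Real.mul_rpow h1.le h3.le, add_halves]
    exact Real.rpow_le_rpow_of_nonpos (by positivity) (by nlinarith) (by linarith)
  have p3 : (t - 1) ^ (lam.re - ν.re - 1) = (t - 1) ^ (lam.re - 1) * (t - 1) ^ (-ν.re) := by
    rw [← Real.rpow_add h1]; congr 1; ring
  have p4 : t ^ ν.re * t ^ (-ν.re) = 1 := by rw [← Real.rpow_add h3]; simp
  calc _ = (t - 1) ^ (lam.re - 1) *
        (t ^ (-ρ.re + ν.re - 1) * t ^ (-(-1 - lam.re - ρ.re) + ν.re - 1)) *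
        (normQBound ν ρ * normQBound ν (-1 - lam - ρ)) *
        ((t ^ 2 - 1) ^ (-ν.re / 2) * (t ^ 2 - 1) ^ (-ν.re / 2)) := by ring
    _ ≤ (t - 1) ^ (lam.re - 1) *
        (t ^ (-ρ.re + ν.re - 1) * t ^ (-(-1 - lam.re - ρ.re) + ν.re - 1)) *
        (normQBound ν ρ * normQBound ν (-1 - lam - ρ)) *
        ((t - 1) ^ (-ν.re) * t ^ (-ν.re)) := mul_le_mul_of_nonneg_left p2 (by positivity)
    _ = _ := by
      rw [p1, p3]
      linear_combination ((t - 1) ^ (lam.re - 1) * (t - 1) ^ (-ν.re) * t ^ (lam.re + ν.re - 1) *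
        (normQBound ν ρ * normQBound ν (-1 - lam - ρ))) * p4

include hl0 hl1

theorem product_integral_differentiableOn :
    DifferentiableOn ℂ (fun ρ => ∫ t in Ioi (1 : ℝ), ((t - 1 : ℝ) : ℂ) ^ (lam - 1) *
      (normQ ν ρ t * normQ ν (-1 - lam - ρ) t))
      {ρ | -(3 / 2) < ρ.re ∧ ρ.re < 1 / 2 - lam.re} := by
  have hσ {ρ : ℂ} (h : ρ.re < 1 / 2 - lam.re) : -(3 / 2) < (-1 - lam - ρ).re := by
    simp; linarith
  refine differentiableOn_integral_of_dominated ((isOpen_lt continuous_const continuous_re).inter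
    (isOpen_lt continuous_re continuous_const)) (fun ρ hρ => ?_) ?_ (fun ρ₀ _ => ?_)
  · exact (Measurable.aestronglyMeasurable (by fun_prop)).mul
      ((normQ_aestronglyMeasurable hν0 hν1 hρ.1).mul
        (normQ_aestronglyMeasurable hν0 hν1 (hσ hρ.2)))
  · filter_upwards [ae_restrict_mem measurableSet_Ioi] with t ht
    refine DifferentiableOn.const_mul (DifferentiableOn.mul ?_ ?_) _
    · exact (normQ_differentiableOn hν0 hν1 ht).mono fun ρ hρ => hρ.1
    · exact (normQ_differentiableOn hν0 hν1 ht).comp (f := fun ρ => -1 - lam - ρ) (by fun_prop)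
        fun ρ hρ => hσ hρ.2
  · have hc : Continuous fun ρ => normQBound ν ρ * normQBound ν (-1 - lam - ρ) :=
      (normQBound_continuous ν).mul ((normQBound_continuous ν).comp (by fun_prop))
    obtain ⟨ε, hε, hb⟩ := Metric.eventually_nhds_iff_ball.1
      ((hc.tendsto ρ₀).eventually_lt_const (lt_add_one _))
    refine ⟨_, (weight_integrable hl0 hl1).mul_const
      (normQBound ν ρ₀ * normQBound ν (-1 - lam - ρ₀) + 1), ε, hε, ?_⟩
    filter_upwards [ae_restrict_mem measurableSet_Ioi] with t ht ρ hρb hρ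
    refine (product_integrand_norm_le hν0 hν1 hρ.1 hρ.2 ht).trans
      (mul_le_mul_of_nonneg_left (hb ρ hρb).le ?_)
    have h1 : 0 < t - 1 := by linarith [mem_Ioi.1 ht]
    have h2 : 0 < t := by linarith
    positivity

/-- Analytic continuation in the degree `ρ` of the product formula from the strip where Mehler's
integral represents both factors. -/
theorem normQ_product_integral {ρ : ℂ} (hρ0 : -(3 / 2) < ρ.re) (hρ1 : ρ.re < 1 / 2 - lam.re) :
    ∫ t in Ioi (1 : ℝ), ((t - 1 : ℝ) : ℂ) ^ (lam - 1) *
      (normQ ν ρ t * normQ ν (-1 - lam - ρ) t) =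
    normConst lam ν * ((Gamma (ρ + 1 + lam))⁻¹ * (Gamma (-ρ))⁻¹) := by
  set U : Set ℂ := {ρ | -(3 / 2) < ρ.re ∧ ρ.re < 1 / 2 - lam.re} with hU
  have hUo : IsOpen U := (isOpen_lt continuous_const continuous_re).inter
    (isOpen_lt continuous_re continuous_const)
  have hUc : IsPreconnected U :=
    ((convex_halfSpace_re_gt _).inter (convex_halfSpace_re_lt _)).isPreconnected
  have g1 : Differentiable ℂ fun ρ : ℂ => (Gamma (ρ + 1 + lam))⁻¹ :=
    differentiable_one_div_Gamma.comp (f := fun ρ : ℂ => ρ + 1 + lam) (by fun_prop)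
  have g2 : Differentiable ℂ fun ρ : ℂ => (Gamma (-ρ))⁻¹ :=
    differentiable_one_div_Gamma.comp (f := fun ρ : ℂ => -ρ) (by fun_prop)
  have A1 := (product_integral_differentiableOn hν0 hν1 hl0 hl1).analyticOnNhd hUo
  have A2 := ((g1.mul g2).const_mul (normConst lam ν)).differentiableOn (s := U)
    |>.analyticOnNhd hUo
  -- the midpoint of the base strip
  set p : ℂ := (((2 * ν.re - lam.re - 1) / 2 : ℝ) : ℂ) with hp
  have hpr : p.re = (2 * ν.re - lam.re - 1) / 2 := ofReal_re _
  have hpU : p ∈ U := ⟨by rw [hpr]; linarith, by rw [hpr]; linarith⟩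
  refine A1.eqOn_of_preconnected_of_eventuallyEq A2 hUc hpU ?_ (⟨hρ0, hρ1⟩ : ρ ∈ U)
  have hV : IsOpen {ρ : ℂ | ν.re - 1 < ρ.re ∧ ρ.re < ν.re - lam.re} :=
    (isOpen_lt continuous_const continuous_re).inter (isOpen_lt continuous_re continuous_const)
  have hpV : ν.re - 1 < p.re ∧ p.re < ν.re - lam.re := by rw [hpr]; constructor <;> linarith
  filter_upwards [hV.mem_nhds hpV] with ρ' hρ'
  exact normQ_product_integral_base hν0 hν1 hl0 hl1 hρ'.1 hρ'.2

end

/-! ### The product formula -/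

theorem constants_identity {e q a1 a2 a3 a4 x1 x2 x3 x4 x5 x6 c d : ℂ} (hq : q ≠ 0) :
    e * q * a1 * x1 * (e * q * a2 * x2) *
      (a3 * (a4 * (1 / 2) * (x3 * x4 / q)) * (x5 * x6) * (c / (q * q)) * d) =
    a1 * a2 * (a3 * a4) / 2 * (e * e) * c / q * (x3 * x4 * x6 * x5 * d) * x2 * x1 := by
  have h : q * q / (q * q) = 1 := div_self (mul_ne_zero hq hq)
  linear_combination
    (a1 * a2 * (a3 * a4) / 2 * (e * e) * c / q * (x3 * x4 * x6 * x5 * d) * x2 * x1) * h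

/-- Value of the integral of a weighted product of two associated Legendre functions of the
second kind. -/
theorem legendreQ_product_integral (ν s w : ℂ)
    (hν₁ : 0 < ν.re) (hν₂ : ν.re < 1 / 2)
    (h₁ : ν.re < ((w - s) / 2).re) (h₂ : ((w - s) / 2).re < 1 / 2)
    (hw₁ : w.re < -(1 / 2)) (hw₂ : max (2 * ν.re + s.re) (-1) < w.re) :
    ∫ t in Ioi (1 : ℝ),
        ((t : ℂ) - 1) ^ ((w - s) / 2 - 1) * legendreQ (-ν) (-(w + 1) / 2) (t : ℂ) *
          legendreQ (-ν) ((s - 1) / 2) (t : ℂ) =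
      (2 : ℂ) ^ ((s - w) / 2 - 1) * Complex.exp (-(2 * Complex.I * ν * Real.pi)) *
        Complex.cos (Real.pi * ν) / (Real.sqrt Real.pi : ℂ) *
        ((Complex.Gamma ((1 + s - w) / 2) * Complex.Gamma ((w - s) / 2) *
            Complex.Gamma ((w - s) / 2 - ν) * Complex.Gamma ((w - s) / 2 + ν)) /
          (Complex.Gamma ((1 - s) / 2) * Complex.Gamma ((1 + w) / 2))) *
        Complex.Gamma ((1 + s) / 2 - ν) * Complex.Gamma ((1 - w) / 2 - ν) := by
  have hwm : -1 < w.re := (le_max_right _ _).trans_lt hw₂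
  have hρ : (-(w + 1) / 2).re = -(w.re + 1) / 2 := by rw [half_re]; simp
  have key := normQ_product_integral hν₁ hν₂ h₁ h₂ (ρ := -(w + 1) / 2)
    (by rw [hρ]; linarith) (by rw [hρ]; linarith)
  rw [show -1 - (w - s) / 2 - -(w + 1) / 2 = (s - 1) / 2 by ring,
    show -(w + 1) / 2 + 1 + (w - s) / 2 = (1 - s) / 2 by ring,
    show -(-(w + 1) / 2) = (1 + w) / 2 by ring] at key
  have hint (t : ℝ) : ((t : ℂ) - 1) ^ ((w - s) / 2 - 1) * legendreQ (-ν) (-(w + 1) / 2) (t : ℂ) *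
        legendreQ (-ν) ((s - 1) / 2) (t : ℂ) =
      (exp (-(ν * Real.pi * I)) * (Real.sqrt Real.pi : ℂ) * 2 ^ (-(-(w + 1) / 2) - 1) *
        Gamma (-(w + 1) / 2 + 1 - ν) *
        (exp (-(ν * Real.pi * I)) * (Real.sqrt Real.pi : ℂ) * 2 ^ (-((s - 1) / 2) - 1) *
        Gamma ((s - 1) / 2 + 1 - ν))) * (((t - 1 : ℝ) : ℂ) ^ ((w - s) / 2 - 1) *
        (normQ ν (-(w + 1) / 2) t * normQ ν ((s - 1) / 2) t)) := by
    rw [legendreQ_eq_normQ, legendreQ_eq_normQ, ofReal_sub, ofReal_one]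
    ring
  simp_rw [hint]
  rw [MeasureTheory.integral_const_mul, key, normConst]
  have hsq : (Real.sqrt Real.pi : ℂ) * (Real.sqrt Real.pi : ℂ) = Real.pi := by
    rw [← ofReal_mul, Real.mul_self_sqrt Real.pi_pos.le]
  have hs0 : (Real.sqrt Real.pi : ℂ) ≠ 0 := by
    exact_mod_cast (Real.sqrt_pos.2 Real.pi_pos).ne'
  have hG : Gamma (1 / 2) = (Real.sqrt Real.pi : ℂ) := by
    have h := Complex.Gamma_ofReal (1 / 2)
    rw [Real.Gamma_one_half_eq] at h
    rw [← h]; norm_num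
  have hrefl : Gamma (ν + 1 / 2) * Gamma (1 / 2 - ν) * cos (Real.pi * ν) = Real.pi := by
    have h := Gamma_mul_Gamma_one_sub (ν + 1 / 2)
    have hs : sin (Real.pi * (ν + 1 / 2)) = cos (Real.pi * ν) := by
      rw [← sin_add_pi_div_two]; congr 1; ring
    have hne : Gamma (ν + 1 / 2) * Gamma (1 / 2 - ν) ≠ 0 :=
      mul_ne_zero (Gamma_ne_zero_of_re_pos (by simp; linarith))
        (Gamma_ne_zero_of_re_pos (by simp; linarith))
    rw [show 1 - (ν + 1 / 2) = 1 / 2 - ν by ring, hs] at h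
    have hc : cos (Real.pi * ν) ≠ 0 := fun hc => by rw [hc, div_zero] at h; exact hne h
    rw [h, div_mul_cancel₀ _ hc]
  have hpi : (Real.pi : ℂ) ≠ 0 := by exact_mod_cast Real.pi_ne_zero
  have hexp : exp (-(ν * Real.pi * I)) * exp (-(ν * Real.pi * I)) =
      exp (-(2 * I * ν * Real.pi)) := by rw [← exp_add]; congr 1; ring
  have h2 : (2 : ℂ) ^ (-(-(w + 1) / 2) - 1) * 2 ^ (-((s - 1) / 2) - 1) *
      (2 ^ (1 - (w - s) / 2) * 2 ^ (-((w - s) / 2))) = 2 ^ ((s - w) / 2 - 1) * 2 ^ (1 : ℂ) := by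
    have h2' : (2 : ℂ) ≠ 0 := two_ne_zero
    rw [← cpow_add _ _ h2', ← cpow_add _ _ h2', ← cpow_add _ _ h2', ← cpow_add _ _ h2']
    congr 1; ring
  rw [show -(w + 1) / 2 + 1 - ν = (1 - w) / 2 - ν by ring,
    show (s - 1) / 2 + 1 - ν = (1 + s) / 2 - ν by ring,
    show 1 / 2 - (w - s) / 2 = (1 + s - w) / 2 by ring, hG, add_comm ν ((w - s) / 2)]
  have hne : Gamma (ν + 1 / 2) * Gamma (1 / 2 - ν) ≠ 0 := fun h => by
    rw [h, zero_mul] at hrefl; exact hpi hrefl.symm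
  have hD : (Gamma (ν + 1 / 2) * Gamma (1 / 2 - ν))⁻¹ =
      cos (Real.pi * ν) / ((Real.sqrt Real.pi : ℂ) * (Real.sqrt Real.pi : ℂ)) := by
    rw [hsq, eq_div_iff hpi, inv_mul_eq_iff_eq_mul₀ hne, hrefl]
  rw [div_eq_mul_inv _ (Gamma (ν + 1 / 2) * Gamma (1 / 2 - ν)), hD, ← hexp]
  rw [cpow_one] at h2
  have h2' := eq_div_of_mul_eq two_ne_zero h2.symm
  rw [h2', div_eq_mul_inv _ (Gamma ((1 - s) / 2) * _), mul_inv]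
  exact constants_identity hs0
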